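/- arXiv:2009.12709 — 2 statements merged into one kernel-verified Lean document; each statement's English description precedes it below -/
import Mathlib

section
/- (Upper bound for the abelian anyon energy on the unit square.) Let N ≥ 2 and let α be a real number with 0 ≤ α < (2πN)^{−1}. Then for every ε > 0 there exists a smooth function Φ : (ℝ²)^N → ℂ, compactly supported away from the fat diagonal △, symmetric under permutations of the N coordinates (Φ(x∘σ) = Φ(x) for all σ ∈ S_N), with ∫_{Q₀^N} |Φ|² = 1 where Q₀ = [0,1]², such that ∫_{Q₀^N} ∑_{j=1}^N ‖(−i∇_j + A_j^α(x)) Φ(x)‖² dx ≤ 2πN(N−1)α · (1 + (20/3)π(N−2)α)/(1 − 2παN)² + ε. In other words, the Neumann N-anyon ground-state energy on the unit square with statistics parameter α is at most 2πN(N−1)α(1 + (20/3)π(N−2)α)/(1 − 2παN)². -/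
open MeasureTheory

noncomputable section

/-- Rotation of a planar vector by 90 degrees: `(v₁, v₂)^⊥ = (−v₂, v₁)`. -/
def perp2 (v : Fin 2 → ℝ) : Fin 2 → ℝ := ![-(v 1), v 0]

/-- The squared Euclidean norm of a planar vector. -/
def normSq2 (v : Fin 2 → ℝ) : ℝ := v 0 ^ 2 + v 1 ^ 2

/-- The `p`-th component of the Aharonov–Bohm-type magnetic potential felt by particle `j`:
`A_j^α(x) = α ∑_{k≠j} (x_j − x_k)^⊥ / |x_j − x_k|²`. -/
def abPotential (N : ℕ) (α : ℝ) (j : Fin N) (p : Fin 2)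
    (x : Fin N → Fin 2 → ℝ) : ℝ :=
  α * ∑ k ∈ Finset.univ.erase j, perp2 (x j - x k) p / normSq2 (x j - x k)

/-- The fat diagonal in `(ℝ²)^N`. -/
def fatDiagonal (N : ℕ) : Set (Fin N → Fin 2 → ℝ) :=
  {x | ∃ j k, j ≠ k ∧ x j = x k}

/-- The configurations with all `N` particles inside the unit square `Q₀ = [0,1]²`. -/
def unitSquareConfigs (N : ℕ) : Set (Fin N → Fin 2 → ℝ) :=
  {x | ∀ j p, x j p ∈ Set.Icc (0 : ℝ) 1}

lemma exists_psi (η : ℝ) (hη : 0 < η) : ∃ ψ ψ' : ℝ → ℝ, ContDiff ℝ (⊤ : ℕ∞) ψ ∧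
    (∀ u, HasDerivAt ψ (ψ' u) u) ∧ (∀ u, 0 ≤ ψ' u) ∧ (∀ u, ψ' u ≤ 1) ∧
    (∀ u, u ≤ η → ψ u = 0) ∧ (∀ u, 0 ≤ ψ u) ∧ (∀ u, 0 ≤ u → ψ u ≤ u) ∧
    (∀ u, u - 2 * η ≤ ψ u) := by
  let ψ' : ℝ → ℝ := fun s => Real.smoothTransition ((s - η) / η)
  have hc : ContDiff ℝ (⊤ : ℕ∞) ψ' := by
    apply Real.smoothTransition.contDiff.comp
    fun_prop
  have hcont : Continuous ψ' := hc.continuous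
  have h0 : ∀ u, 0 ≤ ψ' u := fun u => Real.smoothTransition.nonneg _
  have h1 : ∀ u, ψ' u ≤ 1 := fun u => Real.smoothTransition.le_one _
  let ψ : ℝ → ℝ := fun u => ∫ s in η..u, ψ' s
  have hd : ∀ u, HasDerivAt ψ (ψ' u) u := fun u =>
    hcont.integral_hasStrictDerivAt η u |>.hasDerivAt
  have hz : ∀ u, u ≤ η → ψ' u = 0 := fun u hu =>
    Real.smoothTransition.zero_of_nonpos (div_nonpos_of_nonpos_of_nonneg (by linarith) hη.le)
  have ho : ∀ u, 2 * η ≤ u → ψ' u = 1 := fun u hu =>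
    Real.smoothTransition.one_of_one_le (by rw [le_div_iff₀ hη]; linarith)
  have hzz : ∀ u, u ≤ η → ψ u = 0 := by
    intro u hu
    have : ψ u = ∫ s in η..u, (0 : ℝ) := by
      apply intervalIntegral.integral_congr
      intro s hs
      rw [Set.uIcc_of_ge hu] at hs
      exact hz s hs.2
    simpa using this
  have hdiff : Differentiable ℝ ψ := fun u => (hd u).differentiableAt
  have hderiv : deriv ψ = ψ' := funext fun u => (hd u).deriv
  have hmono : Monotone ψ := monotone_of_deriv_nonneg hdiff (fun u => by rw [hderiv]; exact h0 u)
  have hmono2 : Monotone (fun u => u - ψ u) := by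
    have hd2 : ∀ u, HasDerivAt (fun u => u - ψ u) (1 - ψ' u) u := fun u =>
      (hasDerivAt_id u).sub (hd u)
    apply monotone_of_deriv_nonneg (fun u => (hd2 u).differentiableAt)
    intro u
    rw [(hd2 u).deriv]
    linarith [h1 u]
  have hnn : ∀ u, 0 ≤ ψ u := by
    intro u
    rcases le_total u η with h | h
    · rw [hzz u h]
    · have := hmono h
      rwa [hzz η le_rfl] at this
  refine ⟨ψ, ψ', ?_, hd, h0, h1, hzz, hnn, ?_, ?_⟩
  · rw [contDiff_infty_iff_deriv, hderiv]
    exact ⟨hdiff, hc⟩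
  · intro u hu
    have := hmono2 hu
    simp only [hzz 0 hη.le] at this
    linarith
  · intro u
    rcases le_total u (2 * η) with h | h
    · linarith [hnn u]
    · have : ψ u - ψ (2 * η) = ∫ s in (2 * η)..u, ψ' s := by
        simp only [ψ]
        rw [intervalIntegral.integral_interval_sub_left] <;> exact hcont.intervalIntegrable _ _
      have h2 : ∫ s in (2 * η)..u, ψ' s = ∫ s in (2 * η)..u, (1 : ℝ) := by
        apply intervalIntegral.integral_congr
        intro s hs
        rw [Set.uIcc_of_le h] at hs
        exact ho s hs.1
      rw [h2] at this
      simp at this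
      linarith [hnn (2 * η)]

lemma normSq2_nonneg (v : Fin 2 → ℝ) : 0 ≤ normSq2 v := by unfold normSq2; positivity

lemma normSq2_neg (v : Fin 2 → ℝ) : normSq2 (-v) = normSq2 v := by simp [normSq2]

lemma normSq2_eq_zero {v : Fin 2 → ℝ} (h : normSq2 v = 0) : v = 0 := by
  unfold normSq2 at h
  have h0 : v 0 = 0 := by nlinarith [sq_nonneg (v 0), sq_nonneg (v 1)]
  have h1 : v 1 = 0 := by nlinarith [sq_nonneg (v 0), sq_nonneg (v 1)]
  ext p; fin_cases p <;> simp [h0, h1]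

lemma contDiff_normSq2 : ContDiff ℝ (⊤ : ℕ∞) normSq2 := by
  unfold normSq2; fun_prop

lemma exists_pair (β : ℝ) (hβ : 0 < β) (η : ℝ) (hη : 0 < η) :
    ∃ (h : (Fin 2 → ℝ) → ℝ) (g : (Fin 2 → ℝ) → Fin 2 → ℝ), ContDiff ℝ (⊤ : ℕ∞) h ∧
      (∀ v, 0 ≤ h v) ∧ (∀ v, h (-v) = h v) ∧ (∀ v, h v ≤ (normSq2 v / 2) ^ (β / 4)) ∧
      (∀ v, (normSq2 v / 2) ^ (β / 4) - 2 * η ≤ h v) ∧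
      (∃ δ > 0, ∀ v, normSq2 v < δ → h v = 0) ∧
      (∀ v p, HasDerivAt (fun t : ℝ => h (v + t • Pi.single p 1) ^ 2) (g v p) 0) ∧
      (∀ v, ∑ p, g v p ^ 2 ≤ β ^ 2 * (normSq2 v / 2) ^ β / normSq2 v) := by
  obtain ⟨ψ, ψ', hψ, hd, h0, h1, hz, hnn, hle, hge⟩ := exists_psi η hη
  let h : (Fin 2 → ℝ) → ℝ := fun v => ψ ((normSq2 v / 2) ^ (β / 4))
  obtain ⟨δ, hδ, hδ2⟩ : ∃ δ > 0, ∀ v, normSq2 v < δ → h v = 0 := by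
    refine ⟨2 * η ^ (4 / β), by positivity, fun v hv => ?_⟩
    apply hz
    have : normSq2 v / 2 ≤ η ^ (4 / β) := by linarith
    calc (normSq2 v / 2) ^ (β / 4) ≤ (η ^ (4 / β)) ^ (β / 4) :=
          Real.rpow_le_rpow (by linarith [normSq2_nonneg v]) this (by positivity)
      _ = η := by
          rw [← Real.rpow_mul hη.le]
          have : 4 / β * (β / 4) = 1 := by field_simp
          rw [this, Real.rpow_one]
  let g : (Fin 2 → ℝ) → Fin 2 → ℝ := fun v p =>
    β * h v * ψ' ((normSq2 v / 2) ^ (β / 4)) * (normSq2 v / 2) ^ (β / 4) * v p / normSq2 v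
  have hs0 : ∀ v, 0 ≤ (normSq2 v / 2) ^ (β / 4) := fun v =>
    Real.rpow_nonneg (by linarith [normSq2_nonneg v]) _
  refine ⟨h, g, ?_, fun v => hnn _, fun v => ?_, fun v => hle _ (hs0 v), fun v => hge _,
    ⟨δ, hδ, hδ2⟩, ?_, ?_⟩
  · rw [contDiff_iff_contDiffAt]
    intro v
    by_cases hv : normSq2 v = 0
    · have : h =ᶠ[nhds v] fun _ => 0 := by
        have : ∀ᶠ w in nhds v, normSq2 w < δ :=
          contDiff_normSq2.continuous.continuousAt.eventually_lt continuousAt_const (by rw [hv]; exact hδ)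
        filter_upwards [this] with w hw using hδ2 w hw
      exact contDiffAt_const.congr_of_eventuallyEq this
    · have h1 : ContDiffAt ℝ (⊤ : ℕ∞) (fun v => (normSq2 v / 2) ^ (β / 4)) v :=
        (contDiff_normSq2.contDiffAt.div_const 2).rpow_const_of_ne (by positivity)
      exact hψ.contDiffAt.comp v h1
  · simp only [h, normSq2_neg]
  · intro v p
    by_cases hv : normSq2 v = 0
    · have hg : g v p = 0 := by simp [g, hv]
      rw [hg]
      have : (fun t : ℝ => h (v + t • Pi.single p 1) ^ 2) =ᶠ[nhds 0] fun _ => 0 := by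
        have hc : Continuous (fun t : ℝ => normSq2 (v + t • Pi.single p 1)) :=
          contDiff_normSq2.continuous.comp (by fun_prop)
        have : ∀ᶠ t in nhds (0 : ℝ), normSq2 (v + t • Pi.single p 1) < δ :=
          hc.continuousAt.eventually_lt continuousAt_const (by simpa [hv] using hδ)
        filter_upwards [this] with w hw
        rw [hδ2 _ hw]; norm_num
      exact (hasDerivAt_const (0:ℝ) (0:ℝ)).congr_of_eventuallyEq this
    · have hq : HasDerivAt (fun t : ℝ => normSq2 (v + t • Pi.single p 1)) (2 * v p) 0 := by
        unfold normSq2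
        have hx : ∀ i : Fin 2, HasDerivAt (fun t : ℝ => (v + t • Pi.single p 1 : Fin 2 → ℝ) i)
            ((Pi.single p 1 : Fin 2 → ℝ) i) 0 := by
          intro i
          have := ((hasDerivAt_id (0:ℝ)).mul_const ((Pi.single p 1 : Fin 2 → ℝ) i)).const_add (v i)
          simpa using this
        have := ((hx 0).pow 2).add ((hx 1).pow 2)
        refine this.congr_deriv ?_
        fin_cases p <;> simp
      have hq' : HasDerivAt (fun t : ℝ => (normSq2 (v + t • Pi.single p 1) / 2) ^ (β / 4))
          _ 0 := (hq.div_const 2).rpow_const (p := β / 4) (Or.inl (by simpa using hv))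
      have hh := (((hd _).comp (0:ℝ) hq').pow 2)
      refine hh.congr_deriv ?_
      simp only [zero_smul, add_zero, Function.comp, g, h]
      have hpos : 0 < normSq2 v / 2 := by
        have := normSq2_nonneg v
        positivity
      rw [Real.rpow_sub_one hpos.ne']
      field_simp
      norm_num
      ring
  · intro v
    by_cases hv : normSq2 v = 0
    · simp [g, hv]
    have hpos : 0 < normSq2 v := lt_of_le_of_ne (normSq2_nonneg v) (Ne.symm hv)
    set s := (normSq2 v / 2) ^ (β / 4) with hs
    have hs4 : (normSq2 v / 2) ^ β = s ^ 4 := by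
      rw [hs, ← Real.rpow_natCast, ← Real.rpow_mul (by positivity)]
      congr 1; push_cast; ring
    have e : ∑ p, g v p ^ 2 = β ^ 2 * ((h v * ψ' s) * s) ^ 2 / normSq2 v := by
      have : normSq2 v = v 0 ^ 2 + v 1 ^ 2 := rfl
      simp only [Fin.sum_univ_two, g]
      rw [← hs]
      field_simp
      rw [this]
    rw [e, hs4]
    have hs0 := hs0 v
    have : h v * ψ' s ≤ s * 1 := mul_le_mul (hle _ hs0) (h1 _) (h0 _) hs0
    have h2 : (h v * ψ' s) * s ≤ s * s := by
      apply mul_le_mul_of_nonneg_right _ hs0; linarith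
    have h3 : 0 ≤ (h v * ψ' s) * s := mul_nonneg (mul_nonneg (hnn _) (h0 _)) hs0
    have h4 : ((h v * ψ' s) * s) ^ 2 ≤ s ^ 4 := by
      calc _ ≤ (s * s) ^ 2 := pow_le_pow_left₀ h3 h2 2
        _ = s ^ 4 := by ring
    gcongr

/-- The unit square. -/
def sqQ : Set (Fin 2 → ℝ) := {v | ∀ p, v p ∈ Set.Icc (0 : ℝ) 1}

lemma sqQ_eq : sqQ = Set.univ.pi (fun _ => Set.Icc (0 : ℝ) 1) := by
  ext v; simp only [sqQ, Set.mem_pi, Set.mem_univ, true_imp_iff, Set.mem_ofPred_eq]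

lemma volume_sqQ : volume sqQ = 1 := by
  rw [sqQ_eq, volume_pi_pi]; simp

/-- Uniform measure on the unit square. -/
def nuQ : Measure (Fin 2 → ℝ) := volume.restrict sqQ

instance : IsProbabilityMeasure nuQ := ⟨by
  rw [nuQ, Measure.restrict_apply MeasurableSet.univ, Set.univ_inter, volume_sqQ]⟩

/-- Uniform measure on configurations. -/
def muQ (N : ℕ) : Measure (Fin N → Fin 2 → ℝ) := Measure.pi (fun _ => nuQ)

instance (N : ℕ) : IsProbabilityMeasure (muQ N) := by unfold muQ; infer_instance

lemma restrict_configs (N : ℕ) :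
    (volume : Measure (Fin N → Fin 2 → ℝ)).restrict (unitSquareConfigs N) = muQ N := by
  have : unitSquareConfigs N = Set.univ.pi (fun _ => sqQ) := by
    ext x; simp [unitSquareConfigs, sqQ, Set.mem_pi]
  rw [this, volume_pi, Measure.restrict_pi_pi]
  rfl

lemma measurable_normSq2 : Measurable normSq2 := contDiff_normSq2.continuous.measurable

lemma lintegral_radial (G : ℝ → ENNReal) (hG : Measurable G) :
    ∫⁻ v : Fin 2 → ℝ, G (normSq2 v) =
      ENNReal.ofReal (2 * Real.pi) * ∫⁻ r in Set.Ioi (0 : ℝ), ENNReal.ofReal r * G (r ^ 2) := by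
  have h1 : ∫⁻ v : Fin 2 → ℝ, G (normSq2 v) = ∫⁻ z : ℝ × ℝ, G (z.1 ^ 2 + z.2 ^ 2) := by
    rw [← (volume_preserving_finTwoArrow ℝ).lintegral_comp (f := fun z => G (z.1 ^ 2 + z.2 ^ 2))
      (by fun_prop)]
    rfl
  rw [h1, ← lintegral_comp_polarCoord_symm, polarCoord_target, Measure.volume_eq_prod,
    ← Measure.prod_restrict, lintegral_prod _ (by
      apply Measurable.aemeasurable
      simp only [polarCoord_symm_apply]
      fun_prop)]
  have h2 : ∀ r : ℝ, ∫⁻ θ in Set.Ioo (-Real.pi) Real.pi,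
      ENNReal.ofReal (r, θ).1 • G ((polarCoord.symm (r, θ)).1 ^ 2 + (polarCoord.symm (r, θ)).2 ^ 2)
      = ENNReal.ofReal (2 * Real.pi) * (ENNReal.ofReal r * G (r ^ 2)) := by
    intro r
    have : ∀ θ : ℝ, (polarCoord.symm (r, θ)).1 ^ 2 + (polarCoord.symm (r, θ)).2 ^ 2 = r ^ 2 := by
      intro θ
      simp only [polarCoord_symm_apply]
      nlinarith [Real.sin_sq_add_cos_sq θ]
    simp only [this, smul_eq_mul]
    rw [lintegral_const, Measure.restrict_apply MeasurableSet.univ, Set.univ_inter, Real.volume_Ioo,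
      mul_comm]
    congr 2; ring
  simp only [h2]
  rw [lintegral_const_mul _ (by fun_prop)]

/-- Two-body kernel. -/
def K2 (β : ℝ) (v : Fin 2 → ℝ) : ENNReal :=
  ENNReal.ofReal (if normSq2 v ≤ 2 then β ^ 2 * (normSq2 v / 2) ^ β / normSq2 v else 0)

/-- One over the distance. -/
def K1 (v : Fin 2 → ℝ) : ENNReal := ENNReal.ofReal (1 / √(normSq2 v))

lemma measurable_K2 (β : ℝ) : Measurable (K2 β) := by
  unfold K2
  apply ENNReal.measurable_ofReal.comp
  apply Measurable.ite (measurableSet_le measurable_normSq2 measurable_const)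
  · have := measurable_normSq2; fun_prop
  · fun_prop

lemma measurable_K1 : Measurable K1 := by
  unfold K1
  have := measurable_normSq2; fun_prop

lemma lintegral_nuQ_le (K : (Fin 2 → ℝ) → ENNReal) (a : Fin 2 → ℝ) :
    ∫⁻ y, K (a - y) ∂nuQ ≤ ∫⁻ v, K v := by
  calc ∫⁻ y, K (a - y) ∂nuQ ≤ ∫⁻ y, K (a - y) := lintegral_mono' Measure.restrict_le_self le_rfl
    _ = ∫⁻ v, K v := lintegral_sub_left_eq_self K a

lemma K2_bound (β : ℝ) (hβ : 0 < β) (a : Fin 2 → ℝ) :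
    ∫⁻ y, K2 β (a - y) ∂nuQ ≤ ENNReal.ofReal (Real.pi * β) := by
  refine (lintegral_nuQ_le (K2 β) a).trans ?_
  have := lintegral_radial (fun q => ENNReal.ofReal (if q ≤ 2 then β ^ 2 * (q / 2) ^ β / q else 0))
    (by
      apply ENNReal.measurable_ofReal.comp
      apply Measurable.ite (measurableSet_le measurable_id measurable_const) <;> fun_prop)
  unfold K2
  rw [this]
  have h2 : ∫⁻ r in Set.Ioi (0 : ℝ), ENNReal.ofReal r *
      ENNReal.ofReal (if r ^ 2 ≤ 2 then β ^ 2 * (r ^ 2 / 2) ^ β / r ^ 2 else 0) ≤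
      ENNReal.ofReal (β / 2) := by
    have hI : IntervalIntegrable (fun r : ℝ => β ^ 2 * 2 ^ (-β) * r ^ (2 * β - 1)) volume 0 √2 :=
      (intervalIntegral.intervalIntegrable_rpow' (by linarith)).const_mul _
    have hval : ∫ r in (0:ℝ)..√2, β ^ 2 * 2 ^ (-β) * r ^ (2 * β - 1) = β / 2 := by
      rw [intervalIntegral.integral_const_mul, integral_rpow (Or.inl (by linarith))]
      have : 2 * β - 1 + 1 = 2 * β := by ring
      rw [this, Real.zero_rpow (by positivity), Real.rpow_mul (by positivity)]
      have : (√2 : ℝ) ^ (2:ℝ) = 2 := by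
        rw [← Nat.cast_ofNat, Real.rpow_natCast]; exact Real.sq_sqrt (by norm_num)
      rw [this, Real.rpow_neg (by norm_num)]
      have : (2:ℝ) ^ β ≠ 0 := by positivity
      field_simp
      ring
    have hle : ∫⁻ r in Set.Ioi (0 : ℝ), ENNReal.ofReal r *
        ENNReal.ofReal (if r ^ 2 ≤ 2 then β ^ 2 * (r ^ 2 / 2) ^ β / r ^ 2 else 0) ≤
        ∫⁻ r in Set.Ioc (0 : ℝ) √2, ENNReal.ofReal (β ^ 2 * 2 ^ (-β) * r ^ (2 * β - 1)) := by
      rw [← lintegral_indicator measurableSet_Ioi, ← lintegral_indicator measurableSet_Ioc]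
      apply lintegral_mono
      intro r
      by_cases hr : r ∈ Set.Ioi (0:ℝ)
      · rw [Set.indicator_of_mem hr]
        have hr0 : 0 < r := hr
        by_cases hr2 : r ^ 2 ≤ 2
        · rw [Set.indicator_of_mem (show r ∈ Set.Ioc (0:ℝ) √2 from ⟨hr0, Real.le_sqrt_of_sq_le hr2⟩), if_pos hr2,
            ← ENNReal.ofReal_mul hr0.le]
          apply le_of_eq
          congr 1
          rw [Real.div_rpow (by positivity) (by norm_num), Real.rpow_neg (by norm_num),
            Real.rpow_sub_one hr0.ne', Real.rpow_mul hr0.le]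
          have : r ^ (2:ℝ) = r ^ 2 := by rw [← Nat.cast_ofNat, Real.rpow_natCast]
          rw [this]
          field_simp
        · rw [if_neg hr2]; simp
      · rw [Set.indicator_of_notMem hr]; simp
    refine hle.trans ?_
    rw [← ofReal_integral_eq_lintegral_ofReal]
    · rw [← intervalIntegral.integral_of_le (by positivity), hval]
    · exact (intervalIntegrable_iff_integrableOn_Ioc_of_le (by positivity)).1 hI
    · filter_upwards [self_mem_ae_restrict measurableSet_Ioc] with r hr
      have : 0 < r := hr.1
      positivity
  calc _ ≤ ENNReal.ofReal (2 * Real.pi) * ENNReal.ofReal (β / 2) := by gcongr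
    _ = _ := by
      rw [← ENNReal.ofReal_mul (by positivity)]; congr 1; ring

lemma K1_bound (a : Fin 2 → ℝ) :
    ∫⁻ y, K1 (a - y) ∂nuQ ≤ ENNReal.ofReal (Real.pi + 2) := by
  let G : ℝ → ENNReal := fun q => ENNReal.ofReal (if q ≤ 1 / 4 then 1 / √q else 0)
  have hG : Measurable G := by
    apply ENNReal.measurable_ofReal.comp
    apply Measurable.ite (measurableSet_le measurable_id measurable_const) <;> fun_prop
  have h1 : ∀ v, K1 v ≤ G (normSq2 v) + ENNReal.ofReal 2 := by
    intro v
    simp only [K1, G]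
    split_ifs with h
    · exact le_self_add
    · push Not at h
      rw [ENNReal.ofReal_zero, zero_add]
      apply ENNReal.ofReal_le_ofReal
      have : (1/2 : ℝ) ≤ √(normSq2 v) := Real.le_sqrt_of_sq_le (by linarith)
      rw [div_le_iff₀ (by linarith)]
      linarith
  have h2 : ∫⁻ v, G (normSq2 v) ≤ ENNReal.ofReal Real.pi := by
    rw [lintegral_radial G hG]
    have : ∫⁻ r in Set.Ioi (0 : ℝ), ENNReal.ofReal r * G (r ^ 2) ≤ ENNReal.ofReal (1 / 2) := by
      calc _ ≤ ∫⁻ r in Set.Ioc (0:ℝ) (1 / 2), 1 := by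
            rw [← lintegral_indicator measurableSet_Ioi, ← lintegral_indicator measurableSet_Ioc]
            apply lintegral_mono
            intro r
            by_cases hr : r ∈ Set.Ioi (0:ℝ)
            · rw [Set.indicator_of_mem hr]
              have hr0 : 0 < r := hr
              simp only [G]
              split_ifs with h
              · rw [Set.indicator_of_mem (show r ∈ Set.Ioc (0:ℝ) (1/2) from ⟨hr0, by nlinarith⟩), ← ENNReal.ofReal_mul hr0.le,
                  Real.sqrt_sq hr0.le]
                simp [hr0.ne']
              · simp
            · rw [Set.indicator_of_notMem hr]; simp
        _ = _ := by simp
    calc _ ≤ ENNReal.ofReal (2 * Real.pi) * ENNReal.ofReal (1 / 2) := by gcongr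
      _ = _ := by rw [← ENNReal.ofReal_mul (by positivity)]; congr 1; ring
  calc ∫⁻ y, K1 (a - y) ∂nuQ ≤ ∫⁻ y, (G (normSq2 (a - y)) + ENNReal.ofReal 2) ∂nuQ :=
        lintegral_mono fun y => h1 _
    _ = ∫⁻ y, (fun v => G (normSq2 v)) (a - y) ∂nuQ + ENNReal.ofReal 2 := by
        rw [lintegral_add_right _ measurable_const, lintegral_const, measure_univ, mul_one]
    _ ≤ ENNReal.ofReal Real.pi + ENNReal.ofReal 2 := by
        gcongr
        exact (lintegral_nuQ_le _ a).trans h2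
    _ = _ := by rw [← ENNReal.ofReal_add (by positivity) (by norm_num)]

lemma lintegral_marginal {N : ℕ} (k : Fin N) (f : (Fin N → Fin 2 → ℝ) → ENNReal)
    (hf : Measurable f) :
    ∫⁻ x, f x ∂(muQ N) = ∫⁻ x, (∫⁻ y, f (Function.update x k y) ∂nuQ) ∂(muQ N) := by
  have hm : Measurable (fun x => ∫⁻ y, f (Function.update x k y) ∂nuQ) := by
    have := hf.lmarginal (fun _ : Fin N => nuQ) (s := {k})
    rwa [lmarginal_singleton] at this
  unfold muQ
  rw [lintegral_eq_lmarginal_univ (fun _ => 0), lintegral_eq_lmarginal_univ (fun _ => 0),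
    lmarginal_erase' f hf (Finset.mem_univ k), lmarginal_erase' _ hm (Finset.mem_univ k)]
  simp

lemma integrate_out {N : ℕ} {j k : Fin N} (hjk : j ≠ k) (K : (Fin 2 → ℝ) → ENNReal)
    (hK : Measurable K) (C : ENNReal) (hC : ∀ a, ∫⁻ y, K (a - y) ∂nuQ ≤ C)
    (H : (Fin N → Fin 2 → ℝ) → ENNReal) (hH : Measurable H)
    (hind : ∀ x y, H (Function.update x k y) = H x) :
    ∫⁻ x, K (x j - x k) * H x ∂(muQ N) ≤ C * ∫⁻ x, H x ∂(muQ N) := by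
  rw [lintegral_marginal k _ (by fun_prop), ← lintegral_const_mul _ hH]
  apply lintegral_mono
  intro x
  simp only [Function.update_self, hind, Function.update_of_ne hjk]
  rw [lintegral_mul_const _ (by fun_prop)]
  gcongr
  exact hC _

/-- The Jastrow product over ordered pairs in `S`. -/
def PS {N : ℕ} (h : (Fin 2 → ℝ) → ℝ) (S : Finset (Fin N)) (x : Fin N → Fin 2 → ℝ) : ℝ :=
  ∏ p ∈ S.offDiag, h (x p.1 - x p.2)

lemma PS_insert {N : ℕ} (h : (Fin 2 → ℝ) → ℝ) (hev : ∀ v, h (-v) = h v) (S : Finset (Fin N))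
    (j : Fin N) (hj : j ∉ S) (x : Fin N → Fin 2 → ℝ) :
    PS h (insert j S) x = PS h S x * ∏ k ∈ S, h (x j - x k) ^ 2 := by
  unfold PS
  rw [Finset.offDiag_insert hj, Finset.prod_union, Finset.prod_union, Finset.prod_product,
    Finset.prod_product]
  · simp only [Finset.prod_singleton]
    rw [mul_assoc, ← Finset.prod_mul_distrib]
    congr 1
    apply Finset.prod_congr rfl
    intro k _
    rw [← hev (x k - x j), neg_sub, sq]
  · rw [Finset.disjoint_left]
    rintro ⟨a, b⟩ h1 h2
    simp only [Finset.mem_offDiag, Finset.mem_product, Finset.mem_singleton] at h1 h2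
    exact hj (h2.1 ▸ h1.1)
  · rw [Finset.disjoint_left]
    rintro ⟨a, b⟩ h1 h2
    simp only [Finset.mem_offDiag, Finset.mem_product, Finset.mem_singleton, Finset.mem_union] at h1 h2
    rcases h1 with h1 | h1
    · exact hj (h2.2 ▸ h1.2.1)
    · exact hj (h1.1 ▸ h2.1)

lemma PS_indep {N : ℕ} (h : (Fin 2 → ℝ) → ℝ) (S : Finset (Fin N)) (k : Fin N) (hk : k ∉ S)
    (x : Fin N → Fin 2 → ℝ) (y : Fin 2 → ℝ) : PS h S (Function.update x k y) = PS h S x := by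
  unfold PS
  apply Finset.prod_congr rfl
  rintro ⟨a, b⟩ hp
  simp only [Finset.mem_offDiag] at hp
  have ha : a ≠ k := fun e => hk (e ▸ hp.1)
  have hb : b ≠ k := fun e => hk (e ▸ hp.2.1)
  simp [Function.update_of_ne ha, Function.update_of_ne hb]

lemma PS_nonneg {N : ℕ} (h : (Fin 2 → ℝ) → ℝ) (h0 : ∀ v, 0 ≤ h v) (S : Finset (Fin N))
    (x : Fin N → Fin 2 → ℝ) : 0 ≤ PS h S x := Finset.prod_nonneg fun _ _ => h0 _

lemma PS_le_one {N : ℕ} (h : (Fin 2 → ℝ) → ℝ) (h0 : ∀ v, 0 ≤ h v) (h1 : ∀ v, h v ≤ 1)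
    (S : Finset (Fin N)) (x : Fin N → Fin 2 → ℝ) : PS h S x ≤ 1 :=
  Finset.prod_le_one (fun _ _ => h0 _) fun _ _ => h1 _

lemma PS_anti {N : ℕ} (h : (Fin 2 → ℝ) → ℝ) (h0 : ∀ v, 0 ≤ h v) (h1 : ∀ v, h v ≤ 1)
    {S T : Finset (Fin N)} (hST : S ⊆ T) (x : Fin N → Fin 2 → ℝ) : PS h T x ≤ PS h S x :=
  Finset.prod_le_prod_of_subset_of_le_one (Finset.offDiag_mono hST) (fun _ _ => h0 _)
    fun _ _ _ => h1 _

lemma PS_measurable {N : ℕ} (h : (Fin 2 → ℝ) → ℝ) (hm : Measurable h) (S : Finset (Fin N)) :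
    Measurable (PS h S) := by
  unfold PS
  fun_prop

/-- Normalization integral. -/
def DS {N : ℕ} (h : (Fin 2 → ℝ) → ℝ) (S : Finset (Fin N)) : ENNReal :=
  ∫⁻ x, ENNReal.ofReal (PS h S x ^ 2) ∂(muQ N)

lemma DS_le_one {N : ℕ} (h : (Fin 2 → ℝ) → ℝ) (h0 : ∀ v, 0 ≤ h v) (h1 : ∀ v, h v ≤ 1)
    (S : Finset (Fin N)) : DS h S ≤ 1 := by
  calc DS h S ≤ ∫⁻ _, 1 ∂(muQ N) := by
        apply lintegral_mono
        intro x
        rw [ENNReal.ofReal_le_one]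
        exact pow_le_one₀ (PS_nonneg h h0 S x) (PS_le_one h h0 h1 S x)
    _ = 1 := by simp

lemma one_sub_sum_le {ι : Type*} (S : Finset ι) (a : ι → ℝ) (h0 : ∀ i, 0 ≤ a i)
    (h1 : ∀ i, a i ≤ 1) : 1 ≤ ∏ i ∈ S, a i + ∑ i ∈ S, (1 - a i) := by
  classical
  induction S using Finset.induction_on with
  | empty => simp
  | insert i S hi ih =>
    rw [Finset.prod_insert hi, Finset.sum_insert hi]
    have hp : ∏ i ∈ S, a i ≤ 1 := Finset.prod_le_one (fun _ _ => h0 _) fun _ _ => h1 _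
    nlinarith [h1 i, h0 i]

lemma DS_step {N : ℕ} (h : (Fin 2 → ℝ) → ℝ) (h0 : ∀ v, 0 ≤ h v) (h1 : ∀ v, h v ≤ 1)
    (hev : ∀ v, h (-v) = h v) (hm : Measurable h) (I : ℝ) (hI0 : 0 ≤ I)
    (hI : ∀ a, ∫⁻ y, ENNReal.ofReal (1 - h (a - y) ^ 4) ∂nuQ ≤ ENNReal.ofReal I)
    (S : Finset (Fin N)) (j : Fin N) (hj : j ∉ S) :
    (1 - N * I) * (DS h S).toReal ≤ (DS h (insert j S)).toReal := by
  have hPm := PS_measurable h hm S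
  have hPm2 := PS_measurable h hm (insert j S)
  have key : DS h S ≤ DS h (insert j S) + ∑ k ∈ S, ENNReal.ofReal I * DS h S := by
    calc DS h S ≤ ∫⁻ x, (ENNReal.ofReal (PS h (insert j S) x ^ 2) +
          ∑ k ∈ S, ENNReal.ofReal (1 - h (x k - x j) ^ 4) * ENNReal.ofReal (PS h S x ^ 2)) ∂(muQ N) := by
          apply lintegral_mono
          intro x
          have hnn : ∀ v, 0 ≤ 1 - h v ^ 4 := fun v => by
            have := pow_le_one₀ (n := 4) (h0 v) (h1 v); linarith
          simp only
          have e : ∀ k ∈ S, ENNReal.ofReal (1 - h (x k - x j) ^ 4) * ENNReal.ofReal (PS h S x ^ 2)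
              = ENNReal.ofReal ((1 - h (x k - x j) ^ 4) * PS h S x ^ 2) := fun k _ =>
            (ENNReal.ofReal_mul (hnn _)).symm
          rw [Finset.sum_congr rfl e, ← ENNReal.ofReal_sum_of_nonneg
            (fun k _ => mul_nonneg (hnn _) (sq_nonneg _)),
            ← ENNReal.ofReal_add (sq_nonneg _)
              (Finset.sum_nonneg fun k _ => mul_nonneg (hnn _) (sq_nonneg _))]
          apply ENNReal.ofReal_le_ofReal
          rw [← Finset.sum_mul, PS_insert h hev S j hj, mul_pow, ← Finset.prod_pow]
          have := one_sub_sum_le S (fun k => h (x k - x j) ^ 4) (fun k => by positivity)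
            (fun k => pow_le_one₀ (h0 _) (h1 _))
          have e2 : ∏ k ∈ S, (h (x j - x k) ^ 2) ^ 2 = ∏ k ∈ S, h (x k - x j) ^ 4 := by
            apply Finset.prod_congr rfl
            intro k _
            rw [← hev (x j - x k), neg_sub]; ring
          rw [e2]
          nlinarith [sq_nonneg (PS h S x)]
      _ = DS h (insert j S) + ∑ k ∈ S, ∫⁻ x, ENNReal.ofReal (1 - h (x k - x j) ^ 4) *
            ENNReal.ofReal (PS h S x ^ 2) ∂(muQ N) := by
          rw [lintegral_add_left (by fun_prop), lintegral_finsetSum _ (by intro k _; fun_prop)]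
          rfl
      _ ≤ _ := by
          gcongr with k hk
          have hkj : k ≠ j := fun e => hj (e ▸ hk)
          exact integrate_out hkj (fun v => ENNReal.ofReal (1 - h v ^ 4)) (by fun_prop) _ hI
            (fun x => ENNReal.ofReal (PS h S x ^ 2)) (by fun_prop)
            (fun x y => by rw [PS_indep h S j hj])
  have hfin : ∀ T : Finset (Fin N), DS h T ≠ ⊤ := fun T =>
    ((DS_le_one h h0 h1 T).trans_lt ENNReal.one_lt_top).ne
  have hfin2 : ∑ k ∈ S, ENNReal.ofReal I * DS h S ≠ ⊤ := by
    simp [ENNReal.mul_eq_top, hfin]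
  have := ENNReal.toReal_mono (ENNReal.add_ne_top.2 ⟨hfin _, hfin2⟩) key
  rw [ENNReal.toReal_add (hfin _) hfin2] at this
  simp only [Finset.sum_const, nsmul_eq_mul, ENNReal.toReal_mul, ENNReal.toReal_natCast,
    ENNReal.toReal_ofReal hI0] at this
  have hc : (S.card : ℝ) ≤ N := by
    exact_mod_cast (Finset.card_le_univ S).trans (by simp)
  have h3 : (S.card : ℝ) * (I * (DS h S).toReal) ≤ N * (I * (DS h S).toReal) := by
    gcongr
  linarith

lemma DS_pos {N : ℕ} (h : (Fin 2 → ℝ) → ℝ) (h0 : ∀ v, 0 ≤ h v) (h1 : ∀ v, h v ≤ 1)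
    (hev : ∀ v, h (-v) = h v) (hm : Measurable h) (I : ℝ) (hI0 : 0 ≤ I) (hI1 : N * I < 1)
    (hI : ∀ a, ∫⁻ y, ENNReal.ofReal (1 - h (a - y) ^ 4) ∂nuQ ≤ ENNReal.ofReal I)
    (S : Finset (Fin N)) : 0 < (DS h S).toReal := by
  induction S using Finset.induction_on with
  | empty => simp [DS, PS]
  | insert j S hj ih =>
    have := DS_step h h0 h1 hev hm I hI0 hI S j hj
    have h2 : 0 < (1 - N * I) * (DS h S).toReal := mul_pos (by linarith) ih
    linarith

lemma DS_two {N : ℕ} (h : (Fin 2 → ℝ) → ℝ) (h0 : ∀ v, 0 ≤ h v) (h1 : ∀ v, h v ≤ 1)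
    (hev : ∀ v, h (-v) = h v) (hm : Measurable h) (I : ℝ) (hI0 : 0 ≤ I) (hI1 : N * I < 1)
    (hI : ∀ a, ∫⁻ y, ENNReal.ofReal (1 - h (a - y) ^ 4) ∂nuQ ≤ ENNReal.ofReal I)
    (j k : Fin N) (hjk : j ≠ k) :
    DS h ((Finset.univ.erase k).erase j) ≤
      ENNReal.ofReal ((DS h (Finset.univ : Finset (Fin N))).toReal / (1 - N * I) ^ 2) := by
  have hfin : DS h ((Finset.univ.erase k).erase j) ≠ ⊤ :=
    ((DS_le_one h h0 h1 _).trans_lt ENNReal.one_lt_top).ne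
  rw [← ENNReal.ofReal_toReal hfin]
  apply ENNReal.ofReal_le_ofReal
  have hp : 0 < 1 - N * I := by linarith
  rw [le_div_iff₀ (by positivity)]
  have e1 := DS_step h h0 h1 hev hm I hI0 hI ((Finset.univ.erase k).erase j) j (by simp)
  rw [Finset.insert_erase (by simp [hjk])] at e1
  have e2 := DS_step h h0 h1 hev hm I hI0 hI (Finset.univ.erase k) k (by simp)
  rw [Finset.insert_erase (by simp)] at e2
  have e3 := mul_le_mul_of_nonneg_left e1 hp.le
  linarith

lemma pair_def_bound (β : ℝ) (hβ : 0 < β) (η : ℝ) (q b : ℝ) (hη : 0 < η) (hq : 0 < q) (hb0 : 0 ≤ b) (hb1 : b ≤ 1)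
    (hb : min ((q / 2) ^ (β / 4)) 1 - 2 * η ≤ b) :
    1 - b ^ 4 ≤ 2 * β * (√2 / Real.exp 1) * (1 / √q) + 8 * (2 * η) / 2 := by
  set s := (q / 2) ^ (β / 4) with hs
  have hs0 : 0 ≤ s := by positivity
  set m := min s 1 with hm
  have hm0 : 0 ≤ m := le_min hs0 zero_le_one
  have hm1 : m ≤ 1 := min_le_right _ _
  have h1 : m ^ 4 - b ^ 4 ≤ 8 * η := by
    rcases le_total m b with h | h
    · have := pow_le_pow_left₀ hm0 h 4
      linarith
    · have e : m ^ 4 - b ^ 4 = (m - b) * ((m + b) * (m ^ 2 + b ^ 2)) := by ring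
      have h2 : (m + b) * (m ^ 2 + b ^ 2) ≤ 2 * 2 := by
        apply mul_le_mul _ _ (by positivity) (by norm_num)
        · linarith
        · nlinarith
      have h3 : 0 ≤ (m + b) * (m ^ 2 + b ^ 2) := by positivity
      rw [e]
      nlinarith
  have h2 : 1 - m ^ 4 ≤ 2 * β * (√2 / Real.exp 1) * (1 / √q) := by
    rcases le_total 1 s with h | h
    · rw [hm, min_eq_right h]
      have : 0 ≤ 2 * β * (√2 / Real.exp 1) * (1 / √q) := by positivity
      linarith
    · rw [hm, min_eq_left h]
      have hs4 : s ^ 4 = (q / 2) ^ β := by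
        rw [hs, ← Real.rpow_natCast, ← Real.rpow_mul (by positivity)]
        congr 1; push_cast; ring
      rw [hs4, Real.rpow_def_of_pos (by positivity)]
      have h3 := Real.add_one_le_exp (Real.log (q / 2) * β)
      have hsq : 0 < √q := Real.sqrt_pos.2 hq
      have h2p : 0 < √(2:ℝ) := by positivity
      have h4 : Real.log (√2 / √q / Real.exp 1) ≤ √2 / √q / Real.exp 1 - 1 :=
        Real.log_le_sub_one_of_pos (by positivity)
      rw [Real.log_div (by positivity) (by positivity), Real.log_exp,
        Real.log_div (by positivity) (by positivity), Real.log_sqrt (by norm_num),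
        Real.log_sqrt hq.le] at h4
      rw [Real.log_div (by positivity) (by positivity)] at h3 ⊢
      have h5 : Real.log 2 - Real.log q ≤ 2 * (√2 / √q / Real.exp 1) := by linarith
      have h6 := mul_le_mul_of_nonneg_right h5 hβ.le
      have e : 2 * β * (√2 / Real.exp 1) * (1 / √q) = 2 * (√2 / √q / Real.exp 1) * β := by
        field_simp
      rw [e]
      linarith
  linarith

lemma num_bound : (√2 / Real.exp 1) * (Real.pi + 2) ≤ Real.pi - 2 / 5 := by
  have h1 := Real.exp_one_gt_d9
  have h2 := Real.pi_gt_d2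
  have h3 := Real.pi_lt_d2
  have h4 : √2 ≤ 1.415 := by
    rw [Real.sqrt_le_left (by norm_num)]; norm_num
  rw [div_mul_eq_mul_div, div_le_iff₀ (Real.exp_pos 1)]
  have h5 : √2 * (Real.pi + 2) ≤ 1.415 * (Real.pi + 2) := by gcongr
  have h6 : (Real.pi - 2 / 5) * 2.7182818283 ≤ (Real.pi - 2 / 5) * Real.exp 1 := by
    gcongr; linarith
  linarith

lemma hb_bound (β : ℝ) (hβ : 0 < β) (h : (Fin 2 → ℝ) → ℝ) (h0 : ∀ v, 0 ≤ h v)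
    (hge : ∀ v, (normSq2 v / 2) ^ (β / 4) - 2 * (β / 10) ≤ h v) (a : Fin 2 → ℝ) :
    ∫⁻ y, ENNReal.ofReal (1 - min (h (a - y)) 1 ^ 4) ∂nuQ ≤ ENNReal.ofReal (2 * Real.pi * β) := by
  have hae : ∀ᵐ y ∂nuQ, y ≠ a := by
    have : ∀ᵐ y ∂(volume : Measure (Fin 2 → ℝ)), y ≠ a := by
      rw [ae_iff]; simp
    exact ae_restrict_of_ae this
  set c := 2 * β * (√2 / Real.exp 1) with hc
  have hc0 : 0 ≤ c := by positivity
  calc ∫⁻ y, ENNReal.ofReal (1 - min (h (a - y)) 1 ^ 4) ∂nuQ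
      ≤ ∫⁻ y, (ENNReal.ofReal c * K1 (a - y) + ENNReal.ofReal (8 * (2 * (β / 10)) / 2)) ∂nuQ := by
        apply lintegral_mono_ae
        filter_upwards [hae] with y hy
        have hq : 0 < normSq2 (a - y) := lt_of_le_of_ne (normSq2_nonneg _) (fun e => hy
          (sub_eq_zero.1 (normSq2_eq_zero e.symm)).symm)
        rw [K1, ← ENNReal.ofReal_mul hc0, ← ENNReal.ofReal_add (by positivity) (by positivity)]
        apply ENNReal.ofReal_le_ofReal
        apply pair_def_bound β hβ (β / 10) _ _ (by positivity) hq (le_min (h0 _) zero_le_one) (min_le_right _ _)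
        apply le_min
        · exact (sub_le_sub_right (min_le_left _ _) _).trans (hge _)
        · linarith [min_le_right ((normSq2 (a - y) / 2) ^ (β / 4)) 1]
    _ = ENNReal.ofReal c * ∫⁻ y, K1 (a - y) ∂nuQ + ENNReal.ofReal (8 * (2 * (β / 10)) / 2) := by
        have := measurable_K1
        rw [lintegral_add_right _ measurable_const, lintegral_const, measure_univ, mul_one,
          lintegral_const_mul _ (by fun_prop)]
    _ ≤ ENNReal.ofReal c * ENNReal.ofReal (Real.pi + 2) + ENNReal.ofReal (8 * (2 * (β / 10)) / 2) := by
        gcongr; exact K1_bound a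
    _ ≤ _ := by
        have hp := Real.pi_pos
        rw [← ENNReal.ofReal_mul hc0, ← ENNReal.ofReal_add (by positivity) (by positivity)]
        apply ENNReal.ofReal_le_ofReal
        have := mul_le_mul_of_nonneg_left num_bound (by positivity : 0 ≤ 2 * β)
        rw [hc]
        linarith

lemma sum_sq_bound {ι : Type*} [DecidableEq ι] (S : Finset ι) (V : ι → Fin 2 → ℝ) (B : ι → ℝ)
    (C : ι → ι → ℝ) (hB : ∀ k ∈ S, ∑ p, V k p ^ 2 ≤ B k)
    (hC : ∀ k ∈ S, ∀ l ∈ S, l ≠ k → ∑ p, V k p * V l p ≤ C k l) :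
    ∑ p, (∑ k ∈ S, V k p) ^ 2 ≤ ∑ k ∈ S, B k + ∑ k ∈ S, ∑ l ∈ S.erase k, C k l := by
  have e : ∑ p, (∑ k ∈ S, V k p) ^ 2 = ∑ k ∈ S, ∑ l ∈ S, ∑ p, V k p * V l p := by
    simp only [sq, Finset.sum_mul_sum]
    rw [Finset.sum_comm]
    apply Finset.sum_congr rfl
    intro k _
    rw [Finset.sum_comm]
  rw [e, ← Finset.sum_add_distrib]
  apply Finset.sum_le_sum
  intro k hk
  rw [← Finset.add_sum_erase S _ hk]
  apply add_le_add
  · have := hB k hk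
    simpa only [sq] using this
  · apply Finset.sum_le_sum
    intro l hl
    exact hC k hk l (Finset.mem_of_mem_erase hl) (Finset.ne_of_mem_erase hl)

lemma cs_two (a b : Fin 2 → ℝ) (c d : ℝ) (hc : 0 ≤ c) (hd : 0 ≤ d) (ha : ∑ p, a p ^ 2 ≤ c ^ 2)
    (hb : ∑ p, b p ^ 2 ≤ d ^ 2) : ∑ p, a p * b p ≤ c * d := by
  have h1 := Finset.sum_mul_sq_le_sq_mul_sq Finset.univ a b
  have h2 : (∑ p, a p ^ 2) * (∑ p, b p ^ 2) ≤ c ^ 2 * d ^ 2 :=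
    mul_le_mul ha hb (Finset.sum_nonneg fun _ _ => sq_nonneg _) (sq_nonneg _)
  apply abs_le_of_sq_le_sq' _ (mul_nonneg hc hd) |>.2
  nlinarith

lemma line_deriv {N : ℕ} (h : (Fin 2 → ℝ) → ℝ) (g : (Fin 2 → ℝ) → Fin 2 → ℝ)
    (hev : ∀ v, h (-v) = h v)
    (hg : ∀ v p, HasDerivAt (fun t : ℝ => h (v + t • Pi.single p 1) ^ 2) (g v p) 0)
    (j : Fin N) (p : Fin 2) (x : Fin N → Fin 2 → ℝ) :
    HasDerivAt (fun t : ℝ => PS h Finset.univ (x + t • (Pi.single j (Pi.single p 1) : Fin N → Fin 2 → ℝ)))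
      (∑ k ∈ Finset.univ.erase j, g (x j - x k) p * (PS h (Finset.univ.erase j) x *
        ∏ l ∈ (Finset.univ.erase j).erase k, h (x j - x l) ^ 2)) 0 := by
  have e : ∀ t : ℝ, PS h Finset.univ (x + t • (Pi.single j (Pi.single p 1) : Fin N → Fin 2 → ℝ)) =
      PS h (Finset.univ.erase j) x *
        ∏ k ∈ Finset.univ.erase j, h ((x j - x k) + t • Pi.single p 1) ^ 2 := by
    intro t
    have hu : x + t • (Pi.single j (Pi.single p 1) : Fin N → Fin 2 → ℝ) = Function.update x j (x j + t • Pi.single p 1) := by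
      ext i q
      by_cases hi : i = j
      · subst hi; simp
      · simp [hi]
    rw [hu, ← Finset.insert_erase (Finset.mem_univ j), PS_insert h hev _ j (by simp),
      PS_indep h _ j (by simp)]
    simp only [Finset.insert_erase (Finset.mem_univ j)]
    congr 1
    apply Finset.prod_congr rfl
    intro k hk
    rw [Function.update_self, Function.update_of_ne (Finset.ne_of_mem_erase hk)]
    congr 2
    abel
  simp only [e]
  have := (HasDerivAt.fun_finsetProd (u := Finset.univ.erase j)
    (f := fun k (t : ℝ) => h ((x j - x k) + t • Pi.single p 1) ^ 2)
    (f' := fun k => g (x j - x k) p) (x := 0) (fun k _ => hg (x j - x k) p)).const_mul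
      (PS h (Finset.univ.erase j) x)
  refine this.congr_deriv ?_
  rw [Finset.mul_sum]
  apply Finset.sum_congr rfl
  intro k _
  simp only [zero_smul, add_zero, smul_eq_mul]
  ring

lemma normSq2_le_two {N : ℕ} {x : Fin N → Fin 2 → ℝ} (hx : x ∈ unitSquareConfigs N) (j k : Fin N) :
    normSq2 (x j - x k) ≤ 2 := by
  have h00 := hx j 0
  have h01 := hx j 1
  have h10 := hx k 0
  have h11 := hx k 1
  simp only [Set.mem_Icc] at h00 h01 h10 h11
  simp only [normSq2, Pi.sub_apply]
  nlinarith

lemma perp_sq (v : Fin 2 → ℝ) (α : ℝ) :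
    ∑ p, (α * (perp2 v p / normSq2 v)) ^ 2 = α ^ 2 / normSq2 v := by
  by_cases hv : normSq2 v = 0
  · simp [hv]
  · simp only [Fin.sum_univ_two, perp2]
    field_simp
    simp [normSq2]
    left; ring

/-- The main pointwise bound on the energy density. -/
lemma pointwise_bound {N : ℕ} (α β : ℝ) (hα : 0 ≤ α) (hαβ : α ≤ β) (hβ : 0 < β)
    (h : (Fin 2 → ℝ) → ℝ) (g : (Fin 2 → ℝ) → Fin 2 → ℝ) (h0 : ∀ v, 0 ≤ h v)
    (hev : ∀ v, h (-v) = h v) (hle : ∀ v, h v ≤ (normSq2 v / 2) ^ (β / 4))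
    (hg2 : ∀ v, ∑ p, g v p ^ 2 ≤ β ^ 2 * (normSq2 v / 2) ^ β / normSq2 v)
    (x : Fin N → Fin 2 → ℝ) (hx : x ∈ unitSquareConfigs N) (j : Fin N) :
    ∑ p, ((∑ k ∈ Finset.univ.erase j, g (x j - x k) p * (PS h (Finset.univ.erase j) x *
        ∏ l ∈ (Finset.univ.erase j).erase k, h (x j - x l) ^ 2)) ^ 2 +
        (abPotential N α j p x * PS h Finset.univ x) ^ 2) ≤
      ∑ k ∈ Finset.univ.erase j, 2 * ((β ^ 2 * (normSq2 (x j - x k) / 2) ^ β / normSq2 (x j - x k)) *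
          PS (fun v => min (h v) 1) ((Finset.univ.erase k).erase j) x ^ 2) +
      ∑ k ∈ Finset.univ.erase j, ∑ l ∈ (Finset.univ.erase j).erase k,
        2 * ((β * (1 / √(normSq2 (x j - x k)))) * (β * (1 / √(normSq2 (x j - x l)))) *
          PS (fun v => min (h v) 1) ((Finset.univ.erase l).erase k) x ^ 2) := by
  set hb : (Fin 2 → ℝ) → ℝ := fun v => min (h v) 1 with hhb
  have hb0 : ∀ v, 0 ≤ hb v := fun v => le_min (h0 v) zero_le_one
  have hb1 : ∀ v, hb v ≤ 1 := fun v => min_le_right _ _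
  have hbev : ∀ v, hb (-v) = hb v := fun v => by simp only [hhb, hev]
  have hq0 : ∀ i k, 0 ≤ normSq2 (x i - x k) := fun i k => normSq2_nonneg _
  have hs1 : ∀ i k, (normSq2 (x i - x k) / 2) ^ (β / 4) ≤ 1 := fun i k =>
    Real.rpow_le_one (by linarith [hq0 i k]) (by linarith [normSq2_le_two hx i k]) (by positivity)
  have hsb1 : ∀ i k, (normSq2 (x i - x k) / 2) ^ β ≤ 1 := fun i k =>
    Real.rpow_le_one (by linarith [hq0 i k]) (by linarith [normSq2_le_two hx i k]) (by positivity)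
  have heq : ∀ i k, h (x i - x k) = hb (x i - x k) := fun i k =>
    (min_eq_left ((hle _).trans (hs1 i k))).symm
  have hPS : ∀ S : Finset (Fin N), PS h S x = PS hb S x := fun S =>
    Finset.prod_congr rfl fun p _ => heq _ _
  have hP0 : ∀ S : Finset (Fin N), 0 ≤ PS hb S x := fun S => PS_nonneg hb hb0 S x
  have hP1 : ∀ S T : Finset (Fin N), S ⊆ T → PS hb T x ≤ PS hb S x := fun S T hST =>
    PS_anti hb hb0 hb1 hST x
  set G : Fin N → ℝ := fun k => PS h (Finset.univ.erase j) x *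
        ∏ l ∈ (Finset.univ.erase j).erase k, h (x j - x l) ^ 2 with hG
  have hGe : ∀ k, G k = PS hb (Finset.univ.erase j) x *
        ∏ l ∈ (Finset.univ.erase j).erase k, hb (x j - x l) ^ 2 := by
    intro k; simp only [hG, hPS, heq]
  have hprod1 : ∀ S : Finset (Fin N), ∏ l ∈ S, hb (x j - x l) ^ 2 ≤ 1 := fun S =>
    Finset.prod_le_one (fun _ _ => sq_nonneg _) (fun _ _ => pow_le_one₀ (hb0 _) (hb1 _))
  have hprod0 : ∀ S : Finset (Fin N), 0 ≤ ∏ l ∈ S, hb (x j - x l) ^ 2 := fun S =>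
    Finset.prod_nonneg (fun _ _ => sq_nonneg _)
  have hG0 : ∀ k, 0 ≤ G k := fun k => by rw [hGe]; exact mul_nonneg (hP0 _) (hprod0 _)
  have hG1 : ∀ k, G k ≤ PS hb ((Finset.univ.erase k).erase j) x := by
    intro k
    rw [hGe]
    calc _ ≤ PS hb (Finset.univ.erase j) x := mul_le_of_le_one_right (hP0 _) (hprod1 _)
      _ ≤ _ := hP1 _ _ (Finset.erase_subset_erase _ (Finset.erase_subset _ _))
  have hG2 : ∀ k l, j ≠ k → j ≠ l → G k ≤ PS hb ((Finset.univ.erase l).erase k) x := by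
    intro k l hk hl
    have hmem : j ∈ (Finset.univ.erase l).erase k := by simp [hk, hl]
    rw [← Finset.insert_erase hmem, PS_insert hb hbev _ j (by simp), hGe]
    apply mul_le_mul _ _ (hprod0 _) (hP0 _)
    · exact hP1 _ _ (Finset.erase_subset_erase _ (Finset.subset_univ _))
    · apply Finset.prod_le_prod_of_subset_of_le_one
      · intro i; simp only [Finset.mem_erase, Finset.mem_univ]; tauto
      · intro i _; exact sq_nonneg _
      · intro i _ _; exact pow_le_one₀ (hb0 _) (hb1 _)
  have hF0 : 0 ≤ PS h Finset.univ x := PS_nonneg h h0 _ x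
  have hFG : ∀ k ∈ Finset.univ.erase j, PS h Finset.univ x = h (x j - x k) ^ 2 * G k := by
    intro k hk
    rw [← Finset.insert_erase (Finset.mem_univ j), PS_insert h hev _ j (by simp),
      ← Finset.mul_prod_erase _ _ hk]
    simp only [hG]
    ring
  have hb4 : ∀ k, (h (x j - x k) ^ 2) ^ 2 ≤ (normSq2 (x j - x k) / 2) ^ β := by
    intro k
    have hs4 : (normSq2 (x j - x k) / 2) ^ β = ((normSq2 (x j - x k) / 2) ^ (β / 4)) ^ 4 := by
      rw [← Real.rpow_natCast, ← Real.rpow_mul (by linarith [hq0 j k])]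
      congr 1; push_cast; ring
    rw [hs4, ← pow_mul]
    exact pow_le_pow_left₀ (h0 _) (hle _) 4
  have hFle : ∀ k l, PS h Finset.univ x ≤ PS hb ((Finset.univ.erase l).erase k) x := by
    intro k l; rw [hPS]; exact hP1 _ _ (Finset.subset_univ _)
  have hk1 : ∀ k, (β * (1 / √(normSq2 (x j - x k)))) ^ 2 = β ^ 2 / normSq2 (x j - x k) := by
    intro k
    rw [mul_pow, div_pow, Real.sq_sqrt (hq0 j k)]; ring
  have hk10 : ∀ k, 0 ≤ β * (1 / √(normSq2 (x j - x k))) := fun k => by positivity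
  have hα2 : α ^ 2 ≤ β ^ 2 := pow_le_pow_left₀ hα hαβ 2
  -- gradient part
  have part1 := sum_sq_bound (Finset.univ.erase j) (fun k p => g (x j - x k) p * G k)
    (fun k => (β ^ 2 * (normSq2 (x j - x k) / 2) ^ β / normSq2 (x j - x k)) *
          PS hb ((Finset.univ.erase k).erase j) x ^ 2)
    (fun k l => (β * (1 / √(normSq2 (x j - x k)))) * (β * (1 / √(normSq2 (x j - x l)))) *
          PS hb ((Finset.univ.erase l).erase k) x ^ 2)
    (by
      intro k hk
      simp only [mul_pow, ← Finset.sum_mul]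
      exact mul_le_mul (hg2 _) (pow_le_pow_left₀ (hG0 k) (hG1 k) 2) (sq_nonneg _)
        (div_nonneg (mul_nonneg (sq_nonneg _) (Real.rpow_nonneg (by linarith [hq0 j k]) _)) (hq0 j k)))
    (by
      intro k hk l hl hlk
      have hjk : j ≠ k := (Finset.ne_of_mem_erase hk).symm
      have hjl : j ≠ l := (Finset.ne_of_mem_erase hl).symm
      have e1 : ∀ m, ∑ p, g (x j - x m) p ^ 2 ≤ (β * (1 / √(normSq2 (x j - x m)))) ^ 2 := by
        intro m
        rw [hk1]
        refine (hg2 _).trans ?_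
        apply div_le_div_of_nonneg_right _ (hq0 j m)
        exact mul_le_of_le_one_right (sq_nonneg _) (hsb1 j m)
      have e2 : ∀ m, G m ≤ PS hb ((Finset.univ.erase l).erase k) x → 
          ∑ p, (g (x j - x m) p * G m) ^ 2 ≤ ((β * (1 / √(normSq2 (x j - x m)))) *
            PS hb ((Finset.univ.erase l).erase k) x) ^ 2 := by
        intro m hm
        simp only [mul_pow, ← Finset.sum_mul]
        have := e1 m
        rw [mul_pow] at this
        exact mul_le_mul this (pow_le_pow_left₀ (hG0 m) hm 2) (sq_nonneg _) (by positivity)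
      have := cs_two _ _ _ _ (mul_nonneg (hk10 k) (hP0 _)) (mul_nonneg (hk10 l) (hP0 _))
        (e2 k (hG2 k l hjk hjl)) (e2 l (by rw [Finset.erase_right_comm]; exact hG2 l k hjl hjk))
      refine this.trans (le_of_eq ?_)
      ring)
  -- potential part
  have part2 := sum_sq_bound (Finset.univ.erase j)
    (fun k p => α * (perp2 (x j - x k) p / normSq2 (x j - x k)) * PS h Finset.univ x)
    (fun k => (β ^ 2 * (normSq2 (x j - x k) / 2) ^ β / normSq2 (x j - x k)) *
          PS hb ((Finset.univ.erase k).erase j) x ^ 2)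
    (fun k l => (β * (1 / √(normSq2 (x j - x k)))) * (β * (1 / √(normSq2 (x j - x l)))) *
          PS hb ((Finset.univ.erase l).erase k) x ^ 2)
    (by
      intro k hk
      simp only [mul_pow _ (PS h Finset.univ x), ← Finset.sum_mul]
      rw [perp_sq, hFG k hk, mul_pow, ← mul_assoc]
      apply mul_le_mul _ (pow_le_pow_left₀ (hG0 k) (hG1 k) 2) (sq_nonneg _)
        (div_nonneg (mul_nonneg (sq_nonneg _) (Real.rpow_nonneg (by linarith [hq0 j k]) _)) (hq0 j k))
      rw [div_mul_eq_mul_div]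
      apply div_le_div_of_nonneg_right _ (hq0 j k)
      exact mul_le_mul hα2 (hb4 k) (by positivity) (by positivity))
    (by
      intro k hk l hl hlk
      have e2 : ∀ m, 
          ∑ p, (α * (perp2 (x j - x m) p / normSq2 (x j - x m)) * PS h Finset.univ x) ^ 2
            ≤ ((β * (1 / √(normSq2 (x j - x m)))) *
            PS hb ((Finset.univ.erase l).erase k) x) ^ 2 := by
        intro m
        simp only [mul_pow _ (PS h Finset.univ x), ← Finset.sum_mul]
        rw [perp_sq, mul_pow, hk1]
        apply mul_le_mul _ (pow_le_pow_left₀ hF0 (hFle k l) 2) (sq_nonneg _)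
          (div_nonneg (sq_nonneg _) (hq0 j m))
        exact div_le_div_of_nonneg_right hα2 (hq0 j m)
      have := cs_two _ _ _ _ (mul_nonneg (hk10 k) (hP0 _)) (mul_nonneg (hk10 l) (hP0 _))
        (e2 k) (e2 l)
      refine this.trans (le_of_eq ?_)
      ring)
  have eA : ∀ p, abPotential N α j p x * PS h Finset.univ x = ∑ k ∈ Finset.univ.erase j,
      α * (perp2 (x j - x k) p / normSq2 (x j - x k)) * PS h Finset.univ x := by
    intro p
    rw [abPotential, Finset.mul_sum, Finset.sum_mul]
  rw [Finset.sum_add_distrib]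
  simp only [eA, ← Finset.mul_sum]
  linarith

lemma energy_lintegral {N : ℕ} (β : ℝ) (hβ : 0 < β) (hb : (Fin 2 → ℝ) → ℝ)
    (hm : Measurable hb) (M : ℝ) (hM : 0 ≤ M)
    (hD : ∀ j k : Fin N, j ≠ k → DS hb ((Finset.univ.erase k).erase j) ≤ ENNReal.ofReal M) :
    ∫⁻ x, ∑ j : Fin N, (∑ k ∈ Finset.univ.erase j, 2 * (K2 β (x j - x k) *
          ENNReal.ofReal (PS hb ((Finset.univ.erase k).erase j) x ^ 2)) +
      ∑ k ∈ Finset.univ.erase j, ∑ l ∈ (Finset.univ.erase j).erase k,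
        2 * (ENNReal.ofReal (β ^ 2) * (K1 (x j - x l) * (K1 (x j - x k) *
          ENNReal.ofReal (PS hb ((Finset.univ.erase l).erase k) x ^ 2))))) ∂(muQ N) ≤
    N * (((N - 1 : ℕ) : ENNReal) * ENNReal.ofReal (2 * (Real.pi * β) * M) +
      ((N - 1 : ℕ) : ENNReal) * (((N - 1 - 1 : ℕ) : ENNReal) * ENNReal.ofReal (2 * β ^ 2 * (Real.pi + 2) ^ 2 * M))) := by
  have hpi := Real.pi_pos
  have hK1 := measurable_K1
  have hK2 := measurable_K2 β
  have hP : ∀ S : Finset (Fin N), Measurable (PS hb S) := PS_measurable hb hm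
  have hind : ∀ (S : Finset (Fin N)) (k : Fin N), k ∉ S → ∀ x y,
      ENNReal.ofReal (PS hb S (Function.update x k y) ^ 2) = ENNReal.ofReal (PS hb S x ^ 2) := by
    intro S k hk x y; rw [PS_indep hb S k hk]
  have hA : ∀ j k : Fin N, k ≠ j → ∫⁻ x, 2 * (K2 β (x j - x k) *
      ENNReal.ofReal (PS hb ((Finset.univ.erase k).erase j) x ^ 2)) ∂(muQ N) ≤
      ENNReal.ofReal (2 * (Real.pi * β) * M) := by
    intro j k hkj
    have := hP ((Finset.univ.erase k).erase j)
    rw [lintegral_const_mul _ (by fun_prop)]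
    calc _ ≤ 2 * (ENNReal.ofReal (Real.pi * β) * DS hb ((Finset.univ.erase k).erase j)) := by
          gcongr
          exact integrate_out hkj.symm (K2 β) hK2 _ (K2_bound β hβ) _ (by fun_prop)
            (hind _ k (by simp))
      _ ≤ ENNReal.ofReal 2 * (ENNReal.ofReal (Real.pi * β) * ENNReal.ofReal M) := by
          rw [ENNReal.ofReal_ofNat]
          gcongr
          exact hD j k hkj.symm
      _ = _ := by
          rw [← ENNReal.ofReal_mul (by positivity), ← ENNReal.ofReal_mul (by positivity)]
          congr 1; ring
  have hB : ∀ j k l : Fin N, k ≠ j → l ≠ j → l ≠ k →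
      ∫⁻ x, 2 * (ENNReal.ofReal (β ^ 2) * (K1 (x j - x l) * (K1 (x j - x k) *
          ENNReal.ofReal (PS hb ((Finset.univ.erase l).erase k) x ^ 2)))) ∂(muQ N) ≤
      ENNReal.ofReal (2 * β ^ 2 * (Real.pi + 2) ^ 2 * M) := by
    intro j k l hkj hlj hlk
    have := hP ((Finset.univ.erase l).erase k)
    rw [lintegral_const_mul _ (by fun_prop), lintegral_const_mul _ (by fun_prop)]
    calc _ ≤ 2 * (ENNReal.ofReal (β ^ 2) * (ENNReal.ofReal (Real.pi + 2) *
            (ENNReal.ofReal (Real.pi + 2) * DS hb ((Finset.univ.erase l).erase k)))) := by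
          gcongr
          refine (integrate_out hlj.symm K1 hK1 _ K1_bound _ (by fun_prop) ?_).trans ?_
          · intro x y
            rw [hind _ l (by simp), Function.update_of_ne hlj.symm, Function.update_of_ne hlk.symm]
          · gcongr
            exact integrate_out hkj.symm K1 hK1 _ K1_bound _ (by fun_prop) (hind _ k (by simp))
      _ ≤ ENNReal.ofReal 2 * (ENNReal.ofReal (β ^ 2) * (ENNReal.ofReal (Real.pi + 2) *
            (ENNReal.ofReal (Real.pi + 2) * ENNReal.ofReal M))) := by
          rw [ENNReal.ofReal_ofNat]
          gcongr
          exact hD k l hlk.symm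
      _ = _ := by
          rw [← ENNReal.ofReal_mul (by positivity), ← ENNReal.ofReal_mul (by positivity),
            ← ENNReal.ofReal_mul (by positivity), ← ENNReal.ofReal_mul (by positivity)]
          congr 1; ring
  rw [lintegral_finsetSum _ (by intro j _; fun_prop)]
  have hj : ∀ j : Fin N, j ∈ Finset.univ → ∫⁻ x, (∑ k ∈ Finset.univ.erase j, 2 * (K2 β (x j - x k) *
          ENNReal.ofReal (PS hb ((Finset.univ.erase k).erase j) x ^ 2)) +
      ∑ k ∈ Finset.univ.erase j, ∑ l ∈ (Finset.univ.erase j).erase k,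
        2 * (ENNReal.ofReal (β ^ 2) * (K1 (x j - x l) * (K1 (x j - x k) *
          ENNReal.ofReal (PS hb ((Finset.univ.erase l).erase k) x ^ 2))))) ∂(muQ N) ≤
      ((N - 1 : ℕ) : ENNReal) * ENNReal.ofReal (2 * (Real.pi * β) * M) +
      ((N - 1 : ℕ) : ENNReal) * (((N - 1 - 1 : ℕ) : ENNReal) * ENNReal.ofReal (2 * β ^ 2 * (Real.pi + 2) ^ 2 * M)) := by
    intro j _
    have hc : (Finset.univ.erase j).card = N - 1 := by simp
    rw [lintegral_add_left (by fun_prop), lintegral_finsetSum _ (by intro k _; fun_prop),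
      lintegral_finsetSum _ (by intro k _; fun_prop)]
    apply add_le_add
    · refine (Finset.sum_le_card_nsmul _ _ _ (fun k hk => hA j k (Finset.ne_of_mem_erase hk))).trans ?_
      rw [nsmul_eq_mul, hc]
    · refine (Finset.sum_le_card_nsmul _ _ _ (fun k hk => ?_)).trans (by rw [nsmul_eq_mul, hc])
      rw [lintegral_finsetSum _ (by intro l _; fun_prop)]
      refine (Finset.sum_le_card_nsmul _ _ _ (fun l hl => hB j k l (Finset.ne_of_mem_erase hk)
        (Finset.ne_of_mem_erase (Finset.mem_of_mem_erase hl)) (Finset.ne_of_mem_erase hl))).trans ?_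
      rw [nsmul_eq_mul, Finset.card_erase_of_mem hk, hc]
  refine (Finset.sum_le_card_nsmul _ _ _ hj).trans ?_
  rw [nsmul_eq_mul]; simp

lemma exists_beta (N : ℕ) (hN : 2 ≤ N) (α : ℝ)
    (hα0 : 0 ≤ α) (hα1 : α < (2 * Real.pi * N)⁻¹) (ε : ℝ) (hε : 0 < ε) :
    ∃ β, 0 < β ∧ α ≤ β ∧ N * (2 * Real.pi * β) < 1 ∧
      2 * Real.pi * N * (N - 1) * β *
            (1 + (20 / 3) * Real.pi * ((N : ℝ) - 2) * β) / (1 - 2 * Real.pi * β * N) ^ 2 ≤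
        2 * Real.pi * N * (N - 1) * α *
            (1 + (20 / 3) * Real.pi * ((N : ℝ) - 2) * α) / (1 - 2 * Real.pi * α * N) ^ 2
          + ε := by
  have hpi := Real.pi_pos
  have hN0 : (0:ℝ) < N := by positivity
  have h1 : 2 * Real.pi * α * N < 1 := by
    rw [← one_div, lt_div_iff₀ (by positivity)] at hα1
    linarith
  have hc : ContinuousAt (fun β : ℝ => 2 * Real.pi * N * (N - 1) * β *
      (1 + (20 / 3) * Real.pi * ((N : ℝ) - 2) * β) / (1 - 2 * Real.pi * β * N) ^ 2) α := by
    apply ContinuousAt.div (by fun_prop) (by fun_prop)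
    have : 0 < 1 - 2 * Real.pi * α * N := by linarith
    positivity
  have e1 := hc.eventually_lt continuousAt_const (lt_add_of_pos_right _ hε)
  have e2 : ∀ᶠ β in nhds α, N * (2 * Real.pi * β) < 1 :=
    ContinuousAt.eventually_lt (by fun_prop) continuousAt_const (by linarith)
  have e3 := (e1.and e2).filter_mono (nhdsWithin_le_nhds (s := Set.Ioi α))
  obtain ⟨β, ⟨hβ1, hβ2⟩, hβ3⟩ := (e3.and self_mem_nhdsWithin).exists
  have hβ3 : α < β := hβ3
  exact ⟨β, by linarith, hβ3.le, hβ2, hβ1.le⟩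

lemma measurableSet_configs (N : ℕ) : MeasurableSet (unitSquareConfigs N) := by
  have : unitSquareConfigs N = ⋂ j, ⋂ p, {x | x j p ∈ Set.Icc (0 : ℝ) 1} := by
    ext x; simp [unitSquareConfigs]
  rw [this]
  refine MeasurableSet.iInter fun j => MeasurableSet.iInter fun p => ?_
  exact (show Measurable (fun x : Fin N → Fin 2 → ℝ => x j p) by fun_prop) measurableSet_Icc

lemma ae_configs (N : ℕ) : ∀ᵐ x ∂(muQ N), x ∈ unitSquareConfigs N := by
  rw [← restrict_configs]
  exact ae_restrict_mem (measurableSet_configs N)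

/-- Spatial cutoff. -/
def chiB : ContDiffBump (0 : Fin 2 → ℝ) := ⟨2, 3, by norm_num, by norm_num⟩

lemma chi_one {N : ℕ} {x : Fin N → Fin 2 → ℝ} (hx : x ∈ unitSquareConfigs N) :
    ∀ᶠ y in nhds x, ∏ i, chiB (y i) = 1 := by
  have hx2 : x ∈ Metric.ball (0 : Fin N → Fin 2 → ℝ) 2 := by
    rw [mem_ball_zero_iff, pi_norm_lt_iff (by norm_num)]
    intro i
    rw [pi_norm_lt_iff (by norm_num)]
    intro p
    have := hx i p
    rw [Real.norm_eq_abs, abs_of_nonneg this.1]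
    linarith [this.2]
  filter_upwards [Metric.isOpen_ball.mem_nhds hx2] with y hy
  apply Finset.prod_eq_one
  intro i _
  apply chiB.one_of_mem_closedBall
  rw [mem_closedBall_zero_iff]
  rw [mem_ball_zero_iff] at hy
  exact (norm_le_pi_norm y i).trans hy.le

lemma chi_zero {N : ℕ} {x : Fin N → Fin 2 → ℝ}
    (hx : x ∉ Metric.closedBall (0 : Fin N → Fin 2 → ℝ) 3) : ∏ i, chiB (x i) = 0 := by
  rw [mem_closedBall_zero_iff, pi_norm_le_iff_of_nonneg (by norm_num)] at hx
  push Not at hx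
  obtain ⟨i, hi⟩ := hx
  apply Finset.prod_eq_zero (Finset.mem_univ i)
  apply chiB.zero_of_le_dist
  rw [dist_zero_right]
  exact hi.le

lemma contDiff_PS {N : ℕ} (h : (Fin 2 → ℝ) → ℝ) (hs : ContDiff ℝ (⊤ : ℕ∞) h)
    (S : Finset (Fin N)) : ContDiff ℝ (⊤ : ℕ∞) (PS h S) := by
  unfold PS
  apply contDiff_prod
  intro p _
  exact hs.comp (by fun_prop)

lemma norm_calc (a b f : ℝ) :
    ‖(-Complex.I) * (a : ℂ) + (b : ℂ) * (f : ℂ)‖ ^ 2 = a ^ 2 + (b * f) ^ 2 := by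
  rw [Complex.sq_norm, Complex.normSq_apply]
  simp
  ring

/-- **Upper bound for the abelian anyon energy on the unit square.**
For `0 ≤ α < (2πN)⁻¹` and every `ε > 0` there is a smooth symmetric trial state, compactly
supported away from the fat diagonal and `L²(Q₀^N)`-normalized, whose magnetic kinetic energy
on `Q₀^N` is at most `2πN(N−1)α (1 + (20/3)π(N−2)α)/(1 − 2παN)² + ε`. -/
theorem abelian_energy_upper_bound (N : ℕ) (hN : 2 ≤ N) (α : ℝ)
    (hα0 : 0 ≤ α) (hα1 : α < (2 * Real.pi * N)⁻¹) (ε : ℝ) (hε : 0 < ε) :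
    ∃ Φ : (Fin N → Fin 2 → ℝ) → ℂ,
      ContDiff ℝ (⊤ : ℕ∞) Φ ∧ HasCompactSupport Φ ∧
      (∀ x ∈ fatDiagonal N, x ∉ tsupport Φ) ∧
      (∀ (σ : Equiv.Perm (Fin N)) (x : Fin N → Fin 2 → ℝ), Φ (x ∘ σ) = Φ x) ∧
      (∫ x in unitSquareConfigs N, ‖Φ x‖ ^ 2) = 1 ∧
      (∫ x in unitSquareConfigs N, ∑ j : Fin N, ∑ p : Fin 2,
          ‖(-Complex.I) * fderiv ℝ Φ x (Pi.single j (Pi.single p 1)) +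
            (abPotential N α j p x : ℂ) * Φ x‖ ^ 2) ≤
        2 * Real.pi * N * (N - 1) * α *
            (1 + (20 / 3) * Real.pi * ((N : ℝ) - 2) * α) / (1 - 2 * Real.pi * α * N) ^ 2
          + ε := by
  obtain ⟨β, hβ, hαβ, hNβ, hfinal⟩ := exists_beta N hN α hα0 hα1 ε hε
  obtain ⟨h, g, hs, h0, hev, hle, hge, ⟨δ, hδ, hzero⟩, hg, hg2⟩ :=
    exists_pair β hβ (β / 10) (by positivity)
  have hpi := Real.pi_pos
  set hb : (Fin 2 → ℝ) → ℝ := fun v => min (h v) 1 with hhb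
  have hb0 : ∀ v, 0 ≤ hb v := fun v => le_min (h0 v) zero_le_one
  have hb1 : ∀ v, hb v ≤ 1 := fun v => min_le_right _ _
  have hbev : ∀ v, hb (-v) = hb v := fun v => by simp only [hhb, hev]
  have hbm : Measurable hb := (hs.continuous.min continuous_const).measurable
  have hI : ∀ a, ∫⁻ y, ENNReal.ofReal (1 - hb (a - y) ^ 4) ∂nuQ ≤
      ENNReal.ofReal (2 * Real.pi * β) := fun a => hb_bound β hβ h h0 hge a
  have hI0 : 0 ≤ 2 * Real.pi * β := by positivity
  set d := (DS hb (Finset.univ : Finset (Fin N))).toReal with hd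
  have hdpos : 0 < d := DS_pos hb hb0 hb1 hbev hbm _ hI0 hNβ hI _
  have hD2 := DS_two hb hb0 hb1 hbev hbm _ hI0 hNβ hI
  rw [← hd] at hD2
  have hnorm : ∫ x, PS hb Finset.univ x ^ 2 ∂(muQ N) = d := by
    rw [integral_eq_lintegral_of_nonneg_ae (Filter.Eventually.of_forall fun x => sq_nonneg _)
      ((PS_measurable hb hbm _).pow_const 2).aestronglyMeasurable]
    rfl
  have hPSeq : ∀ x ∈ unitSquareConfigs N, PS h Finset.univ x = PS hb Finset.univ x := by
    intro x hx
    apply Finset.prod_congr rfl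
    intro p _
    refine (min_eq_left ((hle _).trans ?_)).symm
    exact Real.rpow_le_one (by linarith [normSq2_nonneg (x p.1 - x p.2)])
      (by linarith [normSq2_le_two hx p.1 p.2]) (by positivity)
  set c : ℝ := 1 / √d with hc
  have hc2 : c ^ 2 = 1 / d := by rw [hc, div_pow, Real.sq_sqrt hdpos.le, one_pow]
  let φ : (Fin N → Fin 2 → ℝ) → ℝ := fun x => c * (PS h Finset.univ x * ∏ i, chiB (x i))
  have hφs : ContDiff ℝ (⊤ : ℕ∞) φ := by
    apply contDiff_const.mul
    apply (contDiff_PS h hs _).mul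
    apply contDiff_prod
    intro i _
    exact chiB.contDiff.comp (by fun_prop)
  have hφsymm : ∀ (σ : Equiv.Perm (Fin N)) (x : Fin N → Fin 2 → ℝ), φ (x ∘ σ) = φ x := by
    intro σ x
    have e1 : ∏ i, chiB ((x ∘ σ) i) = ∏ i, chiB (x i) :=
      Equiv.prod_comp σ (fun i => chiB (x i))
    have e2 : PS h Finset.univ (x ∘ σ) = PS h Finset.univ x := by
      unfold PS
      apply Finset.prod_equiv (σ.prodCongr σ)
      · intro p; simp [Finset.mem_offDiag]
      · intro p _; rfl
    simp only [φ, e1, e2]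
  have hφloc : ∀ x ∈ unitSquareConfigs N, φ =ᶠ[nhds x] fun y => c * PS h Finset.univ y := by
    intro x hx
    filter_upwards [chi_one hx] with y hy
    simp only [φ, hy, mul_one]
  refine ⟨fun x => (φ x : ℂ), ?_, ?_, ?_, ?_, ?_, ?_⟩
  · exact Complex.ofRealCLM.contDiff.comp hφs
  · apply HasCompactSupport.intro (isCompact_closedBall (0 : Fin N → Fin 2 → ℝ) 3)
    intro x hx
    simp [φ, chi_zero hx]
  · rintro x ⟨j, k, hjk, hxx⟩
    rw [notMem_tsupport_iff_eventuallyEq]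
    have hcont : Continuous (fun y : Fin N → Fin 2 → ℝ => normSq2 (y j - y k)) :=
      contDiff_normSq2.continuous.comp (by fun_prop)
    have : ∀ᶠ y in nhds x, normSq2 (y j - y k) < δ :=
      hcont.continuousAt.eventually_lt continuousAt_const (by simpa [hxx, normSq2] using hδ)
    filter_upwards [this] with y hy
    have : PS h Finset.univ y = 0 :=
      Finset.prod_eq_zero (i := (j, k)) (by simp [Finset.mem_offDiag, hjk]) (hzero _ hy)
    simp [φ, this]
  · intro σ x
    simp only [hφsymm]
  · rw [restrict_configs]
    have : ∫ x, ‖(φ x : ℂ)‖ ^ 2 ∂(muQ N) = ∫ x, c ^ 2 * PS hb Finset.univ x ^ 2 ∂(muQ N) := by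
      apply integral_congr_ae
      filter_upwards [ae_configs N] with x hx
      rw [Complex.norm_real, Real.norm_eq_abs, sq_abs, (hφloc x hx).eq_of_nhds, hPSeq x hx, mul_pow]
    rw [this, integral_const_mul, hnorm, hc2]
    field_simp
  · rw [restrict_configs]
    refine le_trans ?_ hfinal
    set M : ℝ := d / (1 - N * (2 * Real.pi * β)) ^ 2 with hM
    have hM0 : 0 ≤ M := by positivity
    set T : ℝ := N * (((N : ℝ) - 1) * (2 * (Real.pi * β) * M) +
      ((N : ℝ) - 1) * (((N : ℝ) - 2) * (2 * β ^ 2 * (Real.pi + 2) ^ 2 * M))) with hT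
    have hN2 : (0:ℝ) ≤ (N:ℝ) - 2 := by
      have : (2:ℝ) ≤ N := by exact_mod_cast hN
      linarith
    have hN1 : (0:ℝ) ≤ (N:ℝ) - 1 := by linarith
    have hT0 : 0 ≤ T := by positivity
    have hEl := energy_lintegral (N := N) β hβ hb hbm M hM0 hD2
    have hcast : (N * (((N - 1 : ℕ) : ENNReal) * ENNReal.ofReal (2 * (Real.pi * β) * M) +
      ((N - 1 : ℕ) : ENNReal) * (((N - 1 - 1 : ℕ) : ENNReal) *
        ENNReal.ofReal (2 * β ^ 2 * (Real.pi + 2) ^ 2 * M))) : ENNReal) = ENNReal.ofReal T := by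
      have e1 : ((N - 1 : ℕ) : ENNReal) = ENNReal.ofReal ((N:ℝ) - 1) := by
        rw [← ENNReal.ofReal_natCast, Nat.cast_sub (by omega), Nat.cast_one]
      have e2 : ((N - 1 - 1 : ℕ) : ENNReal) = ENNReal.ofReal ((N:ℝ) - 2) := by
        rw [← ENNReal.ofReal_natCast, Nat.sub_sub, Nat.cast_sub (by omega)]; norm_num
      rw [e1, e2, ← ENNReal.ofReal_natCast N, ← ENNReal.ofReal_mul hN1, ← ENNReal.ofReal_mul hN2,
        ← ENNReal.ofReal_mul hN1, ← ENNReal.ofReal_add (by positivity) (by positivity),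
        ← ENNReal.ofReal_mul (by positivity)]
    rw [hcast] at hEl
    have hfinish : c ^ 2 * T ≤ 2 * Real.pi * N * (N - 1) * β *
            (1 + (20 / 3) * Real.pi * ((N : ℝ) - 2) * β) / (1 - 2 * Real.pi * β * N) ^ 2 := by
      have hq : (Real.pi + 2) ^ 2 ≤ (20 / 3) * Real.pi ^ 2 := by
        have := Real.pi_gt_three
        nlinarith
      have e : c ^ 2 * T = (N * ((N : ℝ) - 1) * (2 * (Real.pi * β) +
          ((N : ℝ) - 2) * (2 * β ^ 2 * (Real.pi + 2) ^ 2))) / (1 - 2 * Real.pi * β * N) ^ 2 := by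
        have : 1 - N * (2 * Real.pi * β) = 1 - 2 * Real.pi * β * N := by ring
        rw [hc2, hT, hM, this]
        field_simp
      rw [e]
      apply div_le_div_of_nonneg_right _ (sq_nonneg _)
      calc N * ((N : ℝ) - 1) * (2 * (Real.pi * β) + ((N : ℝ) - 2) * (2 * β ^ 2 * (Real.pi + 2) ^ 2))
          ≤ N * ((N : ℝ) - 1) * (2 * (Real.pi * β) + ((N : ℝ) - 2) * (2 * β ^ 2 * ((20 / 3) * Real.pi ^ 2))) := by
            gcongr
        _ = _ := by ring
    refine le_trans ?_ hfinish
    set E : (Fin N → Fin 2 → ℝ) → ℝ := fun x => ∑ j : Fin N, ∑ p : Fin 2,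
          ‖(-Complex.I) * fderiv ℝ (fun x => (φ x : ℂ)) x (Pi.single j (Pi.single p 1)) +
            (abPotential N α j p x : ℂ) * (φ x : ℂ)‖ ^ 2 with hE
    have hE0 : ∀ x, 0 ≤ E x := fun x => Finset.sum_nonneg fun _ _ => Finset.sum_nonneg fun _ _ => sq_nonneg _
    by_cases hint : Integrable E (muQ N)
    swap
    · rw [integral_undef hint]; positivity
    rw [← ENNReal.ofReal_le_ofReal_iff (by positivity),
      ofReal_integral_eq_lintegral_ofReal hint (Filter.Eventually.of_forall hE0),
      ENNReal.ofReal_mul (sq_nonneg c)]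
    refine le_trans ?_ (mul_le_mul_right hEl _)
    rw [← lintegral_const_mul' _ _ ENNReal.ofReal_ne_top]
    apply lintegral_mono_ae
    filter_upwards [ae_configs N] with x hx
    have hfd : ∀ j p, fderiv ℝ (fun x => (φ x : ℂ)) x (Pi.single j (Pi.single p 1)) =
        ((c * ∑ k ∈ Finset.univ.erase j, g (x j - x k) p * (PS h (Finset.univ.erase j) x *
          ∏ l ∈ (Finset.univ.erase j).erase k, h (x j - x l) ^ 2) : ℝ) : ℂ) := by
      intro j p
      have hPd : DifferentiableAt ℝ (PS h (Finset.univ : Finset (Fin N))) x :=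
        (contDiff_PS h hs _).differentiable (by simp) x
      have hφd : HasFDerivAt φ (c • fderiv ℝ (PS h (Finset.univ : Finset (Fin N))) x) x :=
        (hPd.hasFDerivAt.const_mul c).congr_of_eventuallyEq (hφloc x hx)
      have hΦd := Complex.ofRealCLM.hasFDerivAt.comp x hφd
      have e1 : fderiv ℝ (fun x => (φ x : ℂ)) x = _ := hΦd.fderiv
      rw [e1]
      have hl := line_deriv h g hev hg j p x
      have hl2 : HasDerivAt (fun t : ℝ => PS h Finset.univ
          (x + t • (Pi.single j (Pi.single p 1) : Fin N → Fin 2 → ℝ)))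
          (fderiv ℝ (PS h (Finset.univ : Finset (Fin N))) x (Pi.single j (Pi.single p 1))) 0 :=
        hPd.hasFDerivAt.hasLineDerivAt _
      rw [hl.unique hl2]
      simp
    have hφx : φ x = c * PS h Finset.univ x := (hφloc x hx).eq_of_nhds
    have hEx : E x = c ^ 2 * ∑ j, ∑ p, ((∑ k ∈ Finset.univ.erase j, g (x j - x k) p *
        (PS h (Finset.univ.erase j) x *
        ∏ l ∈ (Finset.univ.erase j).erase k, h (x j - x l) ^ 2)) ^ 2 +
        (abPotential N α j p x * PS h Finset.univ x) ^ 2) := by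
      simp only [hE, hfd, norm_calc, hφx]
      rw [Finset.mul_sum]
      apply Finset.sum_congr rfl
      intro j _
      rw [Finset.mul_sum]
      apply Finset.sum_congr rfl
      intro p _
      ring
    rw [hEx, ENNReal.ofReal_mul (sq_nonneg c)]
    refine mul_le_mul_right ?_ _
    rw [ENNReal.ofReal_sum_of_nonneg (fun j _ => Finset.sum_nonneg fun p _ => by positivity)]
    apply Finset.sum_le_sum
    intro j _
    refine (ENNReal.ofReal_le_ofReal (pointwise_bound α β hα0 hαβ hβ h g h0 hev hle hg2 x hx j)).trans ?_
    have hk2 : ∀ k, 0 ≤ β ^ 2 * (normSq2 (x j - x k) / 2) ^ β / normSq2 (x j - x k) := fun k =>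
      div_nonneg (mul_nonneg (sq_nonneg _) (Real.rpow_nonneg (by linarith [normSq2_nonneg (x j - x k)]) _))
        (normSq2_nonneg _)
    have hn2 : ∀ k, 0 ≤ 2 * ((β ^ 2 * (normSq2 (x j - x k) / 2) ^ β / normSq2 (x j - x k)) *
          PS hb ((Finset.univ.erase k).erase j) x ^ 2) := fun k =>
      mul_nonneg (by norm_num) (mul_nonneg (hk2 k) (sq_nonneg _))
    rw [ENNReal.ofReal_add (Finset.sum_nonneg fun k _ => hn2 k)
      (Finset.sum_nonneg fun k _ => Finset.sum_nonneg fun l _ => by positivity),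
      ENNReal.ofReal_sum_of_nonneg (fun k _ => hn2 k),
      ENNReal.ofReal_sum_of_nonneg (fun k _ => Finset.sum_nonneg fun l _ => by positivity)]
    apply add_le_add
    · apply Finset.sum_le_sum
      intro k _
      apply le_of_eq
      rw [ENNReal.ofReal_mul (by norm_num), ENNReal.ofReal_mul (hk2 k), ENNReal.ofReal_ofNat, K2,
        if_pos (normSq2_le_two hx j k)]
    · apply Finset.sum_le_sum
      intro k _
      rw [ENNReal.ofReal_sum_of_nonneg (fun l _ => by positivity)]
      apply Finset.sum_le_sum
      intro l _
      apply le_of_eq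
      rw [K1, K1, ← ENNReal.ofReal_mul (by positivity), ← ENNReal.ofReal_mul (by positivity),
        ← ENNReal.ofReal_mul (by positivity), ← ENNReal.ofReal_ofNat 2,
        ← ENNReal.ofReal_mul (by norm_num)]
      congr 1
      ring
end
end

section
/- (No H¹-capacity of the fat diagonal.) Let N ≥ 2 and consider ℝ^{2N} = (ℝ²)^N with fat diagonal △ := {x : x_j = x_k for some j ≠ k}. Then smooth compactly supported functions vanishing near △ are dense in H¹: for every smooth compactly supported f : ℝ^{2N} → ℂ and every ε > 0 there exists a smooth compactly supported g : ℝ^{2N} → ℂ vanishing on an open neighborhood of △ such that ∫_{ℝ^{2N}} |f − g|² + ∫_{ℝ^{2N}} ‖∇(f − g)‖² < ε. -/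
open MeasureTheory

namespace FatDiag

abbrev X (N : ℕ) := Fin N → Fin 2 → ℝ

noncomputable def D (N : ℕ) (h : X N → ℂ) (x : X N) : ℝ :=
  ∑ j : Fin N, ∑ p : Fin 2, ‖fderiv ℝ h x (Pi.single j (Pi.single p 1))‖ ^ 2

noncomputable def E (N : ℕ) (h : X N → ℂ) : ℝ :=
  (∫ x : X N, ‖h x‖ ^ 2) + ∫ x : X N, D N h x

lemma sum_aux (s : ℕ → ℝ) (hs : ∀ i, s i = 0 ∨ s i = 1) (n : ℕ) :
    0 ≤ ∑ i ∈ Finset.range n, 4 ^ i * s i ∧ 3 * ∑ i ∈ Finset.range n, 4 ^ i * s i ≤ 4 ^ n := by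
  induction n with
  | zero => simp
  | succ n ih =>
    rw [Finset.sum_range_succ, pow_succ]
    have : (0 : ℝ) < 4 ^ n := by positivity
    rcases hs n with h | h <;> rw [h] <;> constructor <;> linarith

lemma sum_sq (s : ℕ → ℝ) (hs : ∀ i, s i = 0 ∨ s i = 1) (n : ℕ) :
    (∑ i ∈ Finset.range n, 4 ^ i * s i) ^ 2 ≤ 2 * ∑ i ∈ Finset.range n, 16 ^ i * s i := by
  induction n with
  | zero => simp
  | succ n ih =>
    obtain ⟨h0, h1⟩ := sum_aux s hs n
    rw [Finset.sum_range_succ, Finset.sum_range_succ]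
    have h16 : (16 : ℝ) ^ n = 4 ^ n * 4 ^ n := by rw [← mul_pow]; norm_num
    have hp : (0 : ℝ) < 4 ^ n := by positivity
    have hnn : 0 ≤ ∑ i ∈ Finset.range n, 16 ^ i * s i := by
      apply Finset.sum_nonneg
      intro i _
      rcases hs i with h | h <;> rw [h] <;> positivity
    rcases hs n with h | h <;> rw [h]
    · simpa using ih
    · rw [h16]
      nlinarith [mul_nonneg h0 hp.le]

/-- shear -/
noncomputable def shear {N : ℕ} (j k : Fin N) (hjk : j ≠ k) : X N ≃ₗ[ℝ] X N where
  toFun x := x - Pi.single j (x k)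
  invFun x := x + Pi.single j (x k)
  map_add' x y := by
    simp only [Pi.add_apply, Pi.single_add]; abel
  map_smul' c x := by
    simp only [Pi.smul_apply, Pi.single_smul, RingHom.id_apply, smul_sub]
  left_inv x := by simp [Pi.single_eq_of_ne hjk.symm]
  right_inv x := by simp [Pi.single_eq_of_ne hjk.symm]

def S {N : ℕ} (j k : Fin N) (R r : ℝ) : Set (X N) :=
  {x | ‖x‖ ≤ R ∧ ‖x j - x k‖ ≤ r}

lemma S_closed {N : ℕ} (j k : Fin N) (R r : ℝ) : IsClosed (S j k R r) := by
  apply IsClosed.inter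
  · exact isClosed_le (f := fun x : X N => ‖x‖) (g := fun _ => R) (by fun_prop) (by fun_prop)
  · exact isClosed_le (f := fun x : X N => ‖x j - x k‖) (g := fun _ => r)
      (by fun_prop) (by fun_prop)

lemma S_vol {N : ℕ} (j k : Fin N) (hjk : j ≠ k) (R : ℝ) (hR : 0 ≤ R) :
    ∃ V : ℝ, 0 ≤ V ∧ ∀ r, 0 ≤ r → volume (S j k R r) ≤ ENNReal.ofReal (V * r ^ 2) := by
  set T := shear j k hjk
  have hdet : LinearMap.det (T : X N →ₗ[ℝ] X N) ≠ 0 := T.isUnit_det'.ne_zero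
  set d := |(LinearMap.det (T : X N →ₗ[ℝ] X N))⁻¹|
  refine ⟨d * (4 * ∏ l ∈ Finset.univ.erase j, (2 * R) ^ 2), by positivity, fun r hr => ?_⟩
  set B : Set (X N) := Set.pi Set.univ
    (fun l => Metric.closedBall (0 : Fin 2 → ℝ) (if l = j then r else R))
  have hsub : S j k R r ⊆ (T : X N →ₗ[ℝ] X N) ⁻¹' B := by
    rintro x ⟨h1, h2⟩
    simp only [Set.mem_preimage, B, Set.mem_pi, Set.mem_univ, true_imp_iff]
    intro l
    have hT : (T : X N →ₗ[ℝ] X N) x = x - Pi.single j (x k) := rfl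
    rw [hT, mem_closedBall_zero_iff]
    by_cases hl : l = j
    · subst hl; simpa using h2
    · simp only [Pi.sub_apply, Pi.single_eq_of_ne hl, sub_zero, if_neg hl]
      exact (norm_le_pi_norm x l).trans h1
  refine (measure_mono hsub).trans ?_
  rw [Measure.addHaar_preimage_linearMap _ hdet, volume_pi_pi]
  have : ∀ l : Fin N, volume (Metric.closedBall (0 : Fin 2 → ℝ) (if l = j then r else R))
      = ENNReal.ofReal ((2 * if l = j then r else R) ^ 2) := by
    intro l
    rw [Real.volume_pi_closedBall _ (by split_ifs <;> assumption)]
    simp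
  simp_rw [this]
  rw [← ENNReal.ofReal_prod_of_nonneg (fun _ _ => by positivity), ← ENNReal.ofReal_mul (by positivity)]
  apply ENNReal.ofReal_le_ofReal
  rw [← Finset.mul_prod_erase _ _ (Finset.mem_univ j)]
  have h3 : ∏ l ∈ Finset.univ.erase j, (2 * if l = j then r else R) ^ 2
      = ∏ l ∈ Finset.univ.erase j, (2 * R) ^ 2 := by
    apply Finset.prod_congr rfl
    intro l hl
    rw [if_neg (Finset.ne_of_mem_erase hl)]
  rw [h3]
  simp only [if_true]
  apply le_of_eq
  ring

lemma integrable_sq {N : ℕ} {h : X N → ℂ} (hh : ContDiff ℝ (⊤ : ℕ∞) h)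
    (hc : HasCompactSupport h) : Integrable (fun x : X N => ‖h x‖ ^ 2) := by
  apply Continuous.integrable_of_hasCompactSupport
  · have := hh.continuous
    fun_prop
  · exact hc.comp_left (g := fun z : ℂ => ‖z‖ ^ 2) (by simp)

lemma integrable_D {N : ℕ} {h : X N → ℂ} (hh : ContDiff ℝ (⊤ : ℕ∞) h)
    (hc : HasCompactSupport h) : Integrable (D N h) := by
  unfold D
  apply integrable_finsetSum
  intro j _
  apply integrable_finsetSum
  intro p _
  apply Continuous.integrable_of_hasCompactSupport
  · have := hh.continuous_fderiv (by simp)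
    fun_prop
  · exact (hc.fderiv ℝ).comp_left (g := fun L : X N →L[ℝ] ℂ =>
      ‖L (Pi.single j (Pi.single p 1))‖ ^ 2) (by simp)

lemma norm_add_sq_le' (a b : ℂ) : ‖a + b‖ ^ 2 ≤ 2 * ‖a‖ ^ 2 + 2 * ‖b‖ ^ 2 := by
  have := norm_add_le a b
  have h0 := norm_nonneg (a + b)
  nlinarith [sq_nonneg (‖a‖ - ‖b‖), mul_self_le_mul_self h0 this]

lemma E_add {N : ℕ} {u v : X N → ℂ} (hu : ContDiff ℝ (⊤ : ℕ∞) u)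
    (huc : HasCompactSupport u) (hv : ContDiff ℝ (⊤ : ℕ∞) v) (hvc : HasCompactSupport v) :
    E N (fun x => u x + v x) ≤ 2 * E N u + 2 * E N v := by
  have hD : ∀ x, D N (fun x => u x + v x) x ≤ 2 * D N u x + 2 * D N v x := by
    intro x
    unfold D
    simp only [Finset.mul_sum, ← Finset.sum_add_distrib]
    apply Finset.sum_le_sum
    intro j _
    apply Finset.sum_le_sum
    intro p _
    rw [fderiv_fun_add ((hu.differentiable (by simp)) x) ((hv.differentiable (by simp)) x)]
    exact norm_add_sq_le' _ _
  have hw : ContDiff ℝ (⊤ : ℕ∞) (fun x => u x + v x) := hu.add hv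
  have hwc : HasCompactSupport (fun x => u x + v x) := huc.add hvc
  have h1 : (∫ x : X N, ‖u x + v x‖ ^ 2) ≤ 2 * (∫ x : X N, ‖u x‖ ^ 2) + 2 * ∫ x : X N, ‖v x‖ ^ 2 := by
    rw [← integral_const_mul, ← integral_const_mul, ← integral_add
      ((integrable_sq hu huc).const_mul 2) ((integrable_sq hv hvc).const_mul 2)]
    exact integral_mono (integrable_sq hw hwc)
      (((integrable_sq hu huc).const_mul 2).add ((integrable_sq hv hvc).const_mul 2))
      (fun x => norm_add_sq_le' _ _)
  have h2 : (∫ x : X N, D N (fun x => u x + v x) x) ≤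
      2 * (∫ x : X N, D N u x) + 2 * ∫ x : X N, D N v x := by
    rw [← integral_const_mul, ← integral_const_mul, ← integral_add
      ((integrable_D hu huc).const_mul 2) ((integrable_D hv hvc).const_mul 2)]
    exact integral_mono (integrable_D hw hwc)
      (((integrable_D hu huc).const_mul 2).add ((integrable_D hv hvc).const_mul 2)) hD
  unfold E
  linarith

/-- bounds on the elementary pieces -/
lemma piece {N : ℕ} (j k : Fin N) (f : X N → ℂ)
    (hf : ContDiff ℝ (⊤ : ℕ∞) f) (hsupp : HasCompactSupport f)
    (b : ContDiffBump (0 : Fin 2 → ℝ)) (hb : b.rOut = 1) :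
    ∃ A R : ℝ, 0 ≤ A ∧ 0 ≤ R ∧ ∀ i : ℕ, ∀ x : X N,
      ‖(b ((4 : ℝ) ^ i • (x j - x k)) : ℝ) • f x‖ ≤
        A * (4 ^ i * (S j k R ((4 ^ i)⁻¹)).indicator (fun _ => (1 : ℝ)) x) ∧
      ‖fderiv ℝ (fun x : X N => (b ((4 : ℝ) ^ i • (x j - x k)) : ℝ) • f x) x‖ ≤
        A * (4 ^ i * (S j k R ((4 ^ i)⁻¹)).indicator (fun _ => (1 : ℝ)) x) := by
  obtain ⟨M, hM⟩ := hsupp.exists_bound_of_continuous hf.continuous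
  obtain ⟨M', hM'⟩ := (hsupp.fderiv ℝ).exists_bound_of_continuous (hf.continuous_fderiv (by simp))
  have hbs : ContDiff ℝ (⊤ : ℕ∞) b := b.contDiff
  obtain ⟨C, hC⟩ := (b.hasCompactSupport.fderiv ℝ).exists_bound_of_continuous
    (hbs.continuous_fderiv (by simp))
  obtain ⟨R, hR⟩ := hsupp.isCompact.isBounded.exists_norm_le
  have hM0 : 0 ≤ M := (norm_nonneg _).trans (hM 0)
  have hM0' : 0 ≤ M' := (norm_nonneg _).trans (hM' 0)
  have hC0 : 0 ≤ C := (norm_nonneg _).trans (hC 0)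
  refine ⟨M + M' + 2 * C * M, max R 0, by positivity, le_max_right _ _, fun i x => ?_⟩
  have h4 : (1 : ℝ) ≤ 4 ^ i := one_le_pow₀ (by norm_num)
  by_cases hx : x ∈ S j k (max R 0) ((4 ^ i)⁻¹)
  · rw [Set.indicator_of_mem hx]
    have hb1 : ‖(b ((4 : ℝ) ^ i • (x j - x k)) : ℝ)‖ ≤ 1 := by
      rw [Real.norm_of_nonneg b.nonneg]; exact b.le_one
    constructor
    · rw [norm_smul]
      have : ‖(b ((4 : ℝ) ^ i • (x j - x k)) : ℝ)‖ * ‖f x‖ ≤ 1 * M :=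
        mul_le_mul hb1 (hM x) (norm_nonneg _) zero_le_one
      nlinarith [mul_nonneg hC0 hM0]
    · set L : X N →L[ℝ] (Fin 2 → ℝ) := (4 : ℝ) ^ i •
        (ContinuousLinearMap.proj (R := ℝ) (φ := fun _ : Fin N => Fin 2 → ℝ) j -
          ContinuousLinearMap.proj (R := ℝ) (φ := fun _ : Fin N => Fin 2 → ℝ) k) with hL
      have hLn : ‖L‖ ≤ 2 * 4 ^ i := by
        apply ContinuousLinearMap.opNorm_le_bound _ (by positivity)
        intro y
        have : L y = (4 : ℝ) ^ i • (y j - y k) := rfl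
        rw [this, norm_smul, norm_pow, Real.norm_of_nonneg (by norm_num : (0:ℝ) ≤ 4)]
        have h1 := norm_sub_le (y j) (y k)
        have h2 := norm_le_pi_norm y j
        have h3 := norm_le_pi_norm y k
        nlinarith
      have hd1 : HasFDerivAt (fun x : X N => (b ((4 : ℝ) ^ i • (x j - x k)) : ℝ))
          ((fderiv ℝ b (L x)).comp L) x :=
        ((hbs.differentiable (by simp)) (L x)).hasFDerivAt.comp x L.hasFDerivAt
      have hd2 := (hd1.smul ((hf.differentiable (by simp)) x).hasFDerivAt).fderiv
      have hd3 : fderiv ℝ (fun x : X N => (b ((4 : ℝ) ^ i • (x j - x k)) : ℝ) • f x) x = _ := hd2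
      rw [hd3]
      refine (norm_add_le _ _).trans ?_
      rw [norm_smul, ContinuousLinearMap.norm_smulRight_apply]
      have e1 : ‖(b ((4 : ℝ) ^ i • (x j - x k)) : ℝ)‖ * ‖fderiv ℝ f x‖ ≤ 1 * M' :=
        mul_le_mul hb1 (hM' x) (norm_nonneg _) zero_le_one
      have e2 : ‖(fderiv ℝ b (L x)).comp L‖ ≤ C * (2 * 4 ^ i) :=
        (ContinuousLinearMap.opNorm_comp_le _ _).trans
          (mul_le_mul (hC _) hLn (norm_nonneg _) hC0)
      have e3 : ‖(fderiv ℝ b (L x)).comp L‖ * ‖f x‖ ≤ C * (2 * 4 ^ i) * M :=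
        mul_le_mul e2 (hM x) (norm_nonneg _) (by positivity)
      nlinarith
  · have hz : ∀ y, y ∉ S j k (max R 0) ((4 ^ i)⁻¹) →
        (b ((4 : ℝ) ^ i • (y j - y k)) : ℝ) • f y = 0 := by
      intro y hy
      by_cases hfy : f y = 0
      · simp [hfy]
      · have h1 : ‖y‖ ≤ max R 0 :=
          (hR y (subset_tsupport _ hfy)).trans (le_max_left _ _)
        have h2 : ¬ ‖y j - y k‖ ≤ (4 ^ i)⁻¹ := fun h => hy ⟨h1, h⟩
        rw [b.zero_of_le_dist, zero_smul]
        rw [hb, dist_zero_right, norm_smul, norm_pow, Real.norm_of_nonneg (by norm_num : (0:ℝ) ≤ 4)]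
        rw [not_le, inv_lt_iff_one_lt_mul₀' (by positivity)] at h2
        exact h2.le
    have hev : (fun x : X N => (b ((4 : ℝ) ^ i • (x j - x k)) : ℝ) • f x) =ᶠ[nhds x]
        fun _ => 0 := by
      filter_upwards [(S_closed j k (max R 0) ((4 ^ i)⁻¹)).isOpen_compl.mem_nhds hx] with y hy
      exact hz y hy
    rw [Set.indicator_of_notMem hx, hev.fderiv_eq, hz x hx]
    simp

lemma pair {N : ℕ} (j k : Fin N) (hjk : j ≠ k) (f : X N → ℂ)
    (hf : ContDiff ℝ (⊤ : ℕ∞) f) (hsupp : HasCompactSupport f) (ε : ℝ) (hε : 0 < ε) :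
    ∃ g : X N → ℂ, ContDiff ℝ (⊤ : ℕ∞) g ∧ HasCompactSupport g ∧ (∀ x, f x = 0 → g x = 0) ∧
      (∃ U : Set (X N), IsOpen U ∧ (∀ x, x j = x k → x ∈ U) ∧ ∀ x ∈ U, g x = 0) ∧
      E N (fun x => f x - g x) < ε := by
  let b : ContDiffBump (0 : Fin 2 → ℝ) := ⟨1 / 2, 1, by norm_num, by norm_num⟩
  have hbs : ContDiff ℝ (⊤ : ℕ∞) b := b.contDiff
  obtain ⟨A, R, hA, hR, hP⟩ := piece j k f hf hsupp b rfl
  obtain ⟨V, hV, hvol⟩ := S_vol j k hjk R hR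
  obtain ⟨n, hn⟩ := exists_nat_gt ((1 + 2 * N) * (2 * A ^ 2 * V) / ε)
  have hn0 : (0 : ℝ) < n := lt_of_le_of_lt (by positivity) hn
  set h : ℕ → X N → ℂ := fun i x => (b ((4 : ℝ) ^ i • (x j - x k)) : ℝ) • f x with hh
  have hhs : ∀ i, ContDiff ℝ (⊤ : ℕ∞) (h i) := by
    intro i
    have hc : ContDiff ℝ (⊤ : ℕ∞) (fun x : X N => (b ((4 : ℝ) ^ i • (x j - x k)) : ℝ)) :=
      hbs.comp (by fun_prop)
    exact hc.smul hf
  set w : X N → ℂ := fun x => (n : ℝ)⁻¹ • ∑ i ∈ Finset.range n, h i x with hw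
  have hws : ContDiff ℝ (⊤ : ℕ∞) w :=
    (contDiff_const (c := (n : ℝ)⁻¹)).smul
      (ContDiff.sum (s := Finset.range n) (f := h) fun i _ => hhs i)
  have hw0 : ∀ x, f x = 0 → w x = 0 := by
    intro x hx; simp [hw, hh, hx]
  have hg0 : ∀ x, f x = 0 → f x - w x = 0 := fun x hx => by rw [hw0 x hx, hx, sub_zero]
  refine ⟨fun x => f x - w x, hf.sub hws, hsupp.mono fun x hx hfx => hx (hg0 x hfx), hg0, ?_, ?_⟩
  · refine ⟨{x | (4 : ℝ) ^ n * ‖x j - x k‖ < 1 / 2}, isOpen_lt (by fun_prop) (by fun_prop), ?_, ?_⟩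
    · intro x hx; simp [hx]
    · intro x hx
      have : ∀ i ∈ Finset.range n, h i x = f x := by
        intro i hi
        have : (b ((4 : ℝ) ^ i • (x j - x k)) : ℝ) = 1 := by
          apply b.one_of_mem_closedBall
          rw [mem_closedBall_zero_iff, norm_smul, norm_pow,
            Real.norm_of_nonneg (by norm_num : (0:ℝ) ≤ 4)]
          refine le_trans ?_ (le_of_lt hx)
          gcongr
          · norm_num
          · exact (Finset.mem_range.1 hi).le
        simp only [hh, this, one_smul]
      simp only [hw]
      rw [Finset.sum_congr rfl this, Finset.sum_const, Finset.card_range, ← Nat.cast_smul_eq_nsmul ℝ,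
        smul_smul, inv_mul_cancel₀ hn0.ne', one_smul, sub_self]
  · simp only [sub_sub_cancel]
    set s : ℕ → X N → ℝ := fun i => (S j k R ((4 ^ i)⁻¹)).indicator (fun _ => (1 : ℝ)) with hs
    have hs01 : ∀ x i, s i x = 0 ∨ s i x = 1 := by
      intro x i
      simp only [hs, Set.indicator]
      split_ifs <;> simp
    set G : X N → ℝ := fun x => (n : ℝ)⁻¹ ^ 2 * A ^ 2 * (2 * ∑ i ∈ Finset.range n, 16 ^ i * s i x) with hG
    have key : ∀ (x : X N) (t : ℝ), 0 ≤ t → t ≤ (n : ℝ)⁻¹ * ∑ i ∈ Finset.range n, A * (4 ^ i * s i x) →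
        t ^ 2 ≤ G x := by
      intro x t ht hle
      calc t ^ 2 ≤ ((n : ℝ)⁻¹ * ∑ i ∈ Finset.range n, A * (4 ^ i * s i x)) ^ 2 := by gcongr
        _ = (n : ℝ)⁻¹ ^ 2 * A ^ 2 * (∑ i ∈ Finset.range n, 4 ^ i * s i x) ^ 2 := by
          rw [← Finset.mul_sum]; ring
        _ ≤ _ := by
          simp only [hG]
          gcongr
          exact sum_sq (fun i => s i x) (hs01 x) n
    have b1 : ∀ x, ‖w x‖ ^ 2 ≤ G x := by
      intro x
      apply key x _ (norm_nonneg _)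
      simp only [hw]
      rw [norm_smul, Real.norm_of_nonneg (by positivity)]
      gcongr
      exact (norm_sum_le _ _).trans (Finset.sum_le_sum fun i _ => (hP i x).1)
    have b2 : ∀ x, ‖fderiv ℝ w x‖ ≤ (n : ℝ)⁻¹ * ∑ i ∈ Finset.range n, A * (4 ^ i * s i x) := by
      intro x
      have hd : ∀ i ∈ Finset.range n, HasFDerivAt (h i) (fderiv ℝ (h i) x) x :=
        fun i _ => ((hhs i).differentiable (by simp) x).hasFDerivAt
      have := ((HasFDerivAt.fun_sum hd).const_smul (n : ℝ)⁻¹).fderiv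
      have h2 : fderiv ℝ w x = _ := this
      rw [h2, norm_smul, Real.norm_of_nonneg (by positivity)]
      gcongr
      exact (norm_sum_le _ _).trans (Finset.sum_le_sum fun i _ => (hP i x).2)
    have b3 : ∀ x, D N w x ≤ (2 * N) * G x := by
      intro x
      unfold D
      calc _ ≤ ∑ j : Fin N, ∑ p : Fin 2, G x := by
            apply Finset.sum_le_sum
            intro j _
            apply Finset.sum_le_sum
            intro p _
            apply key x _ (norm_nonneg _)
            refine le_trans ?_ (b2 x)
            refine (ContinuousLinearMap.le_opNorm _ _).trans ?_
            rw [Pi.norm_single, Pi.norm_single]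
            simp
        _ = _ := by simp; ring
    have hSfin : ∀ i, volume (S j k R ((4 ^ i)⁻¹)) < ⊤ :=
      fun i => (hvol _ (by positivity)).trans_lt ENNReal.ofReal_lt_top
    have hsi : ∀ i, Integrable (s i) := fun i =>
      (integrable_indicator_iff (S_closed _ _ _ _).measurableSet).2
        (integrableOn_const (hSfin i).ne)
    have hsint : ∀ i, (16 : ℝ) ^ i * ∫ x, s i x ≤ V := by
      intro i
      have h1 : ∫ x, s i x ≤ V * ((4 ^ i)⁻¹) ^ 2 := by
        simp only [hs]
        rw [integral_indicator (S_closed _ _ _ _).measurableSet]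
        simp only [integral_const, smul_eq_mul, mul_one, Measure.real, Measure.restrict_apply_univ]
        exact ENNReal.toReal_le_of_le_ofReal (by positivity) (hvol _ (by positivity))
      have h16 : (16 : ℝ) ^ i = (4 ^ i) ^ 2 := by rw [← pow_mul, mul_comm, pow_mul]; norm_num
      calc (16 : ℝ) ^ i * ∫ x, s i x ≤ (16 : ℝ) ^ i * (V * ((4 ^ i)⁻¹) ^ 2) := by gcongr
        _ = V := by rw [h16]; field_simp
    have hGi : Integrable G := by
      apply Integrable.const_mul
      apply Integrable.const_mul
      apply integrable_finsetSum
      intro i _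
      exact (hsi i).const_mul _
    have hGint : ∫ x, G x ≤ 2 * A ^ 2 * V / n := by
      simp only [hG]
      rw [integral_const_mul, integral_const_mul, integral_finsetSum _ (fun i _ => (hsi i).const_mul _)]
      simp only [integral_const_mul]
      calc _ ≤ (n : ℝ)⁻¹ ^ 2 * A ^ 2 * (2 * ∑ i ∈ Finset.range n, V) := by
            gcongr with i _
            exact hsint i
        _ = _ := by
            simp
            field_simp
    have i1 : (∫ x : X N, ‖w x‖ ^ 2) ≤ ∫ x, G x :=
      integral_mono_of_nonneg (Filter.Eventually.of_forall fun x => by positivity) hGi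
        (Filter.Eventually.of_forall b1)
    have i2 : (∫ x : X N, D N w x) ≤ (2 * N) * ∫ x, G x := by
      rw [← integral_const_mul]
      refine integral_mono_of_nonneg (Filter.Eventually.of_forall fun x => ?_) (hGi.const_mul _)
        (Filter.Eventually.of_forall b3)
      simp only [D, Pi.zero_apply]
      positivity
    have hfin : E N w ≤ (1 + 2 * N) * (2 * A ^ 2 * V) / n := by
      unfold E
      calc _ ≤ (1 + 2 * N) * ∫ x, G x := by linarith
        _ ≤ (1 + 2 * N) * (2 * A ^ 2 * V / n) := by gcongr
        _ = _ := by ring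
    refine lt_of_le_of_lt hfin ?_
    rw [div_lt_iff₀ hε] at hn
    rw [div_lt_iff₀ hn0]
    linarith

lemma pairs {N : ℕ} (f : X N → ℂ)
    (hf : ContDiff ℝ (⊤ : ℕ∞) f) (hsupp : HasCompactSupport f)
    (P : Finset (Fin N × Fin N)) : ∀ ε : ℝ, 0 < ε →
    ∃ g : X N → ℂ, ContDiff ℝ (⊤ : ℕ∞) g ∧ HasCompactSupport g ∧
      (∃ U : Set (X N), IsOpen U ∧ (∀ p ∈ P, p.1 ≠ p.2 → ∀ x, x p.1 = x p.2 → x ∈ U) ∧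
        ∀ x ∈ U, g x = 0) ∧
      E N (fun x => f x - g x) < ε := by
  induction P using Finset.induction_on with
  | empty =>
    intro ε hε
    refine ⟨f, hf, hsupp, ⟨∅, isOpen_empty, by simp, by simp⟩, ?_⟩
    simpa [E, D] using hε
  | insert q P _ ih =>
    intro ε hε
    obtain ⟨g, hg, hgc, ⟨U, hU, hPU, hgU⟩, hE⟩ := ih (ε / 4) (by positivity)
    by_cases hq : q.1 = q.2
    · refine ⟨g, hg, hgc, ⟨U, hU, ?_, hgU⟩, by linarith⟩
      intro p hp hne
      rcases Finset.mem_insert.1 hp with rfl | hp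
      · exact absurd hq hne
      · exact hPU p hp hne
    · obtain ⟨g', hg', hgc', hz, ⟨U', hU', hqU, hgU'⟩, hE'⟩ :=
        pair q.1 q.2 hq g hg hgc (ε / 4) (by positivity)
      refine ⟨g', hg', hgc', ⟨U ∪ U', hU.union hU', ?_, ?_⟩, ?_⟩
      · intro p hp hne x hx
        rcases Finset.mem_insert.1 hp with rfl | hp
        · exact Or.inr (hqU x hx)
        · exact Or.inl (hPU p hp hne x hx)
      · rintro x (hx | hx)
        · exact hz x (hgU x hx)
        · exact hgU' x hx
      · have := E_add (u := fun x => f x - g x) (v := fun x => g x - g' x)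
          (hf.sub hg) (hsupp.sub hgc) (hg.sub hg') (hgc.sub hgc')
        simp only [sub_add_sub_cancel] at this
        linarith

end FatDiag

/-- **No `H¹`-capacity of the fat diagonal** (`H¹₀(ℝ^{2N} ∖ △) = H¹(ℝ^{2N})`):
smooth compactly supported functions vanishing on a neighborhood of the fat diagonal are
dense in `H¹` among smooth compactly supported functions. -/
theorem fat_diagonal_H1_density (N : ℕ) (hN : 2 ≤ N)
    (f : (Fin N → Fin 2 → ℝ) → ℂ)
    (hf : ContDiff ℝ (⊤ : ℕ∞) f) (hsupp : HasCompactSupport f)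
    (ε : ℝ) (hε : 0 < ε) :
    ∃ g : (Fin N → Fin 2 → ℝ) → ℂ,
      ContDiff ℝ (⊤ : ℕ∞) g ∧ HasCompactSupport g ∧
      (∃ U : Set (Fin N → Fin 2 → ℝ), IsOpen U ∧ fatDiagonal N ⊆ U ∧
        ∀ x ∈ U, g x = 0) ∧
      (∫ x : Fin N → Fin 2 → ℝ, ‖f x - g x‖ ^ 2) +
          (∫ x : Fin N → Fin 2 → ℝ, ∑ j : Fin N, ∑ p : Fin 2,
            ‖fderiv ℝ (fun y => f y - g y) x (Pi.single j (Pi.single p 1))‖ ^ 2) < ε := by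
  obtain ⟨g, hg, hgc, ⟨U, hU, hPU, hgU⟩, hE⟩ :=
    FatDiag.pairs f hf hsupp Finset.univ ε hε
  refine ⟨g, hg, hgc, ⟨U, hU, ?_, hgU⟩, hE⟩
  rintro x ⟨j, k, hjk, hx⟩
  exact hPU (j, k) (Finset.mem_univ _) hjk x hx
end
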